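/- arXiv:1607.00370 — 4 statements merged into one kernel-verified Lean document; each statement's English description precedes it below -/
import Mathlib

section
/- A finite-dimensional Lie algebra g over a field of characteristic zero is reductive (admits a faithful semisimple finite-dimensional representation) if and only if it admits a nondegenerate trace form, i.e., a finite-dimensional representation ρ such that (x,y) ↦ trace(ρ(x)ρ(y)) is nondegenerate. -/
/-- A finite-dimensional representation of a Lie algebra `L` over `K`. -/
structure FinDimRep (K L : Type) [Field K] [LieRing L] [LieAlgebra K L] : Type 1 where
  carrier : Type
  [isAddCommGroup : AddCommGroup carrier]
  [isModule : Module K carrier]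
  [isLieRingModule : LieRingModule L carrier]
  [isLieModule : LieModule K L carrier]
  [isFinite : FiniteDimensional K carrier]

attribute [instance] FinDimRep.isAddCommGroup FinDimRep.isModule FinDimRep.isLieRingModule
  FinDimRep.isLieModule FinDimRep.isFinite

/-- A Lie algebra is reductive if it has a faithful semisimple (completely
reducible) finite-dimensional representation. -/
def IsReductive (K L : Type) [Field K] [LieRing L] [LieAlgebra K L] : Prop :=
  ∃ R : FinDimRep K L,
    Function.Injective (LieModule.toEnd K L R.carrier) ∧
      ComplementedLattice (LieSubmodule K L R.carrier)

open LieModule Polynomial in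
theorem RedAux.isNilpotent_of_trace {K M : Type*} [Field K] [CharZero K] [AddCommGroup M]
    [Module K M] [FiniteDimensional K M] (f : Module.End K M)
    (h : ∀ p : K[X], LinearMap.trace K M (f * aeval f p) = 0) : IsNilpotent f := by
  have hne : minpoly K f ≠ 0 := minpoly.ne_zero (Algebra.IsIntegral.isIntegral f)
  obtain ⟨q, hq, hnd⟩ := Polynomial.exists_eq_pow_rootMultiplicity_mul_and_not_dvd
    (minpoly K f) hne 0
  set k := (minpoly K f).rootMultiplicity 0
  simp only [map_zero, sub_zero] at hq hnd
  have hco : IsCoprime (X ^ (k + 1)) q :=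
    IsCoprime.pow_left ((Polynomial.irreducible_X.coprime_iff_not_dvd).2 hnd)
  obtain ⟨a, b, hab⟩ := hco
  have hmin : aeval f (X ^ k * q) = 0 := by rw [← hq]; exact minpoly.aeval K f
  set e := aeval f (a * X ^ (k + 1)) with he
  have hid : IsIdempotentElem e := by
    have h1 : a * X ^ (k + 1) * (a * X ^ (k + 1)) =
        a * X ^ (k + 1) - (a * b * X) * (X ^ k * q) := by
      have : a * X ^ (k + 1) = 1 - b * q := by rw [← hab]; ring
      calc a * X ^ (k + 1) * (a * X ^ (k + 1)) = a * X ^ (k + 1) * (1 - b * q) := by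
            rw [← this]
        _ = _ := by ring
    rw [IsIdempotentElem, he, ← map_mul, h1, map_sub, map_mul _ (a * b * X), hmin, mul_zero,
      sub_zero]
  have htr : LinearMap.trace K M e = 0 := by
    rw [← h (a * X ^ k), he]
    congr 1
    rw [show a * X ^ (k + 1) = X * (a * X ^ k) by ring, map_mul, aeval_X]
  have he0 : e = 0 := LinearMap.IsIdempotentElem.eq_zero_of_trace_eq_zero hid htr
  refine ⟨k, ?_⟩
  have h2 : (X : K[X]) ^ k = X ^ k * (a * X ^ (k + 1)) + b * (X ^ k * q) := by
    calc (X : K[X]) ^ k = X ^ k * (a * X ^ (k + 1) + b * q) := by rw [hab, mul_one]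
      _ = _ := by ring
  have h3 := congrArg (aeval f) h2
  rw [map_add, map_mul, map_mul _ b, hmin, ← he, he0] at h3
  simpa using h3

section
open LieModule LieAlgebra
variable {K L M : Type*} [Field K] [CharZero K] [LieRing L] [LieAlgebra K L]
  [FiniteDimensional K L] [AddCommGroup M] [Module K M] [LieRingModule L M] [LieModule K L M]
  [FiniteDimensional K M]

theorem RedAux.trace_zero (I : LieIdeal K L) (x : L) (hx : x ∈ ⁅(⊤ : LieIdeal K L), I⁆)
    (p : Module.End K M) (hp : ∀ b ∈ I, Commute (toEnd K L M b) p) :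
    LinearMap.trace K M (toEnd K L M x * p) = 0 := by
  rw [← LieSubmodule.mem_toSubmodule, LieSubmodule.lieIdeal_oper_eq_linear_span] at hx
  induction hx using Submodule.span_induction with
  | mem u hu =>
    obtain ⟨a, b, rfl⟩ := hu
    have hc := hp b b.2
    have : toEnd K L M ⁅(a : L), (b : L)⁆ * p =
        toEnd K L M a * (p * toEnd K L M b) - (toEnd K L M b) * (toEnd K L M a * p) := by
      rw [← hc.eq]
      ext m
      simp [lie_lie]
    change LinearMap.trace K M (toEnd K L M ⁅(a : L), (b : L)⁆ * p) = 0
    rw [this, map_sub, LinearMap.trace_mul_comm K (toEnd K L M b), mul_assoc, sub_self]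
  | zero => simp
  | add u v _ _ hu hv => simp [add_mul, hu, hv]
  | smul t u _ hu => simp [hu]

theorem RedAux.nilp (I : LieIdeal K L) (x : L) (hx : x ∈ ⁅(⊤ : LieIdeal K L), I⁆)
    (hc : ∀ b ∈ I, ⁅b, x⁆ = 0) : IsNilpotent (toEnd K L M x) := by
  apply RedAux.isNilpotent_of_trace
  intro p
  apply RedAux.trace_zero I x hx
  intro b hb
  have h0 : Commute (toEnd K L M x) (toEnd K L M b) := by
    refine LinearMap.ext fun m => ?_
    have := leibniz_lie b x m
    rw [hc b hb, zero_lie, zero_add] at this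
    exact this.symm
  refine (Algebra.commute_of_mem_adjoin_singleton_of_commute (R := K) ?_ h0.symm)
  exact Polynomial.aeval_mem_adjoin_singleton K _

theorem RedAux.trivial_of_nilp [ComplementedLattice (LieSubmodule K L M)] (J : LieIdeal K L)
    (hJ : ∀ x ∈ J, IsNilpotent (toEnd K L M x)) (x : L) (hx : x ∈ J) (m : M) : ⁅x, m⁆ = 0 := by
  let W : LieSubmodule K L M :=
    { carrier := {m | ∀ x ∈ J, ⁅x, m⁆ = 0}
      add_mem' := by intro a b ha hb x hx; simp [ha x hx, hb x hx]
      zero_mem' := by intro x _; simp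
      smul_mem' := by intro c a ha x hx; simp [ha x hx]
      lie_mem := by
        intro y m hm x hx
        rw [leibniz_lie, hm x hx, lie_zero, add_zero]
        exact hm _ (lie_mem_left K L J x y hx) }
  obtain ⟨C, hC⟩ := exists_isCompl W
  have hCbot : C = ⊥ := by
    by_contra hne
    have : Nontrivial C := (LieSubmodule.nontrivial_iff_ne_bot K L M).2 hne
    have : IsNilpotent J C := by
      rw [LieModule.isNilpotent_iff_forall' (R := K)]
      rintro ⟨x, hx⟩
      obtain ⟨k, hk⟩ := hJ x hx
      refine ⟨k, ?_⟩
      ext m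
      have : ∀ j : ℕ, ∀ m : C, (((toEnd K J C ⟨x, hx⟩) ^ j) m : M) = ((toEnd K L M x) ^ j) m := by
        intro j
        induction j with
        | zero => intro m; rfl
        | succ j ih => intro m; rw [pow_succ, pow_succ, Module.End.mul_apply, ih]; rfl
      rw [this, hk]; rfl
    have := nontrivial_max_triv_of_isNilpotent K J C
    obtain ⟨⟨m, hm⟩, hm0⟩ := exists_ne (0 : maxTrivSubmodule K J C)
    rw [mem_maxTrivSubmodule] at hm
    apply hm0
    have hW : (m : M) ∈ W := fun x hx => by
      have := congrArg Subtype.val (hm ⟨x, hx⟩)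
      exact this
    have : (m : M) ∈ W ⊓ C := ⟨hW, m.2⟩
    rw [hC.inf_eq_bot, LieSubmodule.mem_bot] at this
    ext; exact this
  have : W = ⊤ := by have := hC.sup_eq_top; rwa [hCbot, sup_bot_eq] at this
  have hm : m ∈ W := this ▸ LieSubmodule.mem_top m
  exact hm x hx

variable [ComplementedLattice (LieSubmodule K L M)]

theorem RedAux.center_inf (hinj : Function.Injective (toEnd K L M)) (x : L)
    (hx : x ∈ ⁅(⊤ : LieIdeal K L), (⊤ : LieIdeal K L)⁆) (hxc : x ∈ center K L) : x = 0 := by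
  apply hinj
  rw [map_zero]
  ext m
  refine RedAux.trivial_of_nilp (⁅(⊤ : LieIdeal K L), (⊤ : LieIdeal K L)⁆ ⊓ center K L) ?_ x
    ⟨hx, hxc⟩ m
  intro y hy
  exact RedAux.nilp ⊤ y hy.1 fun b _ => (mem_maxTrivSubmodule K L L y).1 hy.2 b

theorem RedAux.abelian_le (hinj : Function.Injective (toEnd K L M)) (I : LieIdeal K L)
    (hI : IsLieAbelian I) : I ≤ center K L := by
  intro x hx
  rw [mem_maxTrivSubmodule]
  intro y
  apply hinj
  rw [map_zero]
  ext m
  refine RedAux.trivial_of_nilp ⁅(⊤ : LieIdeal K L), I⁆ ?_ ⁅y, x⁆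
    (LieSubmodule.lie_mem_lie (LieSubmodule.mem_top y) hx) m
  intro z hz
  refine RedAux.nilp I z hz fun b hb => ?_
  have hz' : z ∈ I := LieSubmodule.lie_le_right I ⊤ hz
  exact congrArg Subtype.val (hI.trivial ⟨b, hb⟩ ⟨z, hz'⟩)

theorem RedAux.radical_le (hinj : Function.Injective (toEnd K L M)) :
    radical K L ≤ center K L := by
  rcases h : derivedLengthOfIdeal K L (radical K L) with - | k
  · have := (derivedLength_zero (radical K L)).1 h
    rw [this]; exact bot_le
  · have h' := (derivedSeries_of_derivedLength_succ K L _ k).1 h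
    have hc := RedAux.abelian_le hinj _ h'.1
    rcases k with - | k
    · simpa using hc
    · exfalso
      apply h'.2
      rw [LieSubmodule.eq_bot_iff]
      intro x hx
      refine RedAux.center_inf hinj x ?_ (hc hx)
      rw [derivedSeriesOfIdeal_succ] at hx
      exact LieSubmodule.mono_lie le_top le_top hx

end

section
variable {K L : Type} [Field K] [LieRing L] [LieAlgebra K L]

/-- The direct sum of two representations. -/
def RedAux.prodRep (A B : FinDimRep K L) : FinDimRep K L :=
  letI i1 : LieRingModule L (A.carrier × B.carrier) :=
    { bracket := fun x m => (⁅x, m.1⁆, ⁅x, m.2⁆)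
      add_lie := fun x y m => Prod.ext (add_lie x y m.1) (add_lie x y m.2)
      lie_add := fun x m n => Prod.ext (lie_add x m.1 n.1) (lie_add x m.2 n.2)
      leibniz_lie := fun x y m => Prod.ext (leibniz_lie x y m.1) (leibniz_lie x y m.2) }
  letI i2 : LieModule K L (A.carrier × B.carrier) :=
    { smul_lie := fun t x m => Prod.ext (smul_lie t x m.1) (smul_lie t x m.2)
      lie_smul := fun t x m => Prod.ext (lie_smul t x m.1) (lie_smul t x m.2) }
  { carrier := A.carrier × B.carrier }

theorem RedAux.traceForm_prodRep (A B : FinDimRep K L) (x y : L) :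
    LieModule.traceForm K L (RedAux.prodRep A B).carrier x y =
      LieModule.traceForm K L A.carrier x y + LieModule.traceForm K L B.carrier x y := by
  simp only [LieModule.traceForm_apply_apply]
  rw [← LinearMap.trace_prodMap']
  rfl

theorem RedAux.complemented_prodRep (A B : FinDimRep K L)
    (hA : ComplementedLattice (LieSubmodule K L A.carrier))
    (hB : ComplementedLattice (LieSubmodule K L B.carrier)) :
    ComplementedLattice (LieSubmodule K L (RedAux.prodRep A B).carrier) := by
  constructor
  intro N
  let NA : LieSubmodule K L A.carrier :=
    { carrier := {a | ((a, 0) : A.carrier × B.carrier) ∈ N}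
      add_mem' := by
        intro a b ha hb
        have := N.add_mem ha hb
        have h2 : ((a, 0) : A.carrier × B.carrier) + (b, 0) = (a + b, 0) := by simp
        change ((a + b, 0) : A.carrier × B.carrier) ∈ N
        rw [← h2]; exact this
      zero_mem' := N.zero_mem
      smul_mem' := by
        intro c a ha
        have := N.smul_mem c ha
        have h2 : c • ((a, 0) : A.carrier × B.carrier) = (c • a, 0) := by simp
        change ((c • a, 0) : A.carrier × B.carrier) ∈ N
        rw [← h2]; exact this
      lie_mem := by
        intro x a ha
        have := N.lie_mem (x := x) ha
        have h2 : ((⁅x, a⁆, ⁅x, (0 : B.carrier)⁆) : A.carrier × B.carrier) = (⁅x, a⁆, 0) := by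
          simp
        change ((⁅x, a⁆, 0) : A.carrier × B.carrier) ∈ N
        rw [← h2]; exact this }
  let NB : LieSubmodule K L B.carrier :=
    { carrier := {b | ∃ a : A.carrier, ((a, b) : A.carrier × B.carrier) ∈ N}
      add_mem' := by
        rintro b b' ⟨a, ha⟩ ⟨a', ha'⟩
        exact ⟨a + a', N.add_mem ha ha'⟩
      zero_mem' := ⟨0, N.zero_mem⟩
      smul_mem' := by
        rintro c b ⟨a, ha⟩
        exact ⟨c • a, N.smul_mem c ha⟩
      lie_mem := by
        rintro x b ⟨a, ha⟩
        exact ⟨⁅x, a⁆, N.lie_mem (x := x) ha⟩ }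
  obtain ⟨A', hA'⟩ := hA.exists_isCompl NA
  obtain ⟨B', hB'⟩ := hB.exists_isCompl NB
  let C : LieSubmodule K L (RedAux.prodRep A B).carrier :=
    { carrier := {m : A.carrier × B.carrier | m.1 ∈ A' ∧ m.2 ∈ B'}
      add_mem' := fun {m n} hm hn => ⟨A'.add_mem hm.1 hn.1, B'.add_mem hm.2 hn.2⟩
      zero_mem' := ⟨A'.zero_mem, B'.zero_mem⟩
      smul_mem' := fun c m hm => ⟨A'.smul_mem c hm.1, B'.smul_mem c hm.2⟩
      lie_mem := fun {x m} hm => ⟨A'.lie_mem (x := x) hm.1, B'.lie_mem (x := x) hm.2⟩ }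
  refine ⟨C, IsCompl.of_eq ?_ ?_⟩
  · rw [LieSubmodule.eq_bot_iff]
    rintro ⟨a, b⟩ ⟨hN, hCa, hCb⟩
    have hb : b ∈ NB ⊓ B' := ⟨⟨a, hN⟩, hCb⟩
    rw [hB'.inf_eq_bot, LieSubmodule.mem_bot] at hb
    subst hb
    have ha : a ∈ NA ⊓ A' := ⟨hN, hCa⟩
    rw [hA'.inf_eq_bot, LieSubmodule.mem_bot] at ha
    subst ha
    rfl
  · rw [eq_top_iff]
    rintro ⟨a, b⟩ -
    have hb : b ∈ NB ⊔ B' := by rw [hB'.sup_eq_top]; exact LieSubmodule.mem_top b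
    obtain ⟨n, ⟨a0, hn⟩, b', hb', hnb⟩ := (LieSubmodule.mem_sup NB B' b).1 hb
    have ha : a - a0 ∈ NA ⊔ A' := by rw [hA'.sup_eq_top]; exact LieSubmodule.mem_top _
    obtain ⟨c, hc, a', ha', hca⟩ := (LieSubmodule.mem_sup NA A' _).1 ha
    refine (LieSubmodule.mem_sup N C _).2 ⟨_, N.add_mem hn hc, ((a', b') : A.carrier × B.carrier), ⟨ha', hb'⟩, ?_⟩
    refine Prod.ext ?_ ?_
    · change a0 + c + a' = a
      rw [add_assoc, hca]; abel
    · change n + 0 + b' = b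
      rw [add_zero, hnb]

/-- The representation by diagonal matrices given by functionals vanishing on brackets. -/
def RedAux.diagRep (n : ℕ) (l : L →ₗ[K] (Fin n → K)) (hl : ∀ x y : L, l ⁅x, y⁆ = 0) :
    FinDimRep K L :=
  letI i1 : LieRingModule L (Fin n → K) :=
    { bracket := fun x m => l x * m
      add_lie := fun x y m => by change l (x + y) * m = l x * m + l y * m; rw [map_add, add_mul]
      lie_add := fun x m m' => mul_add (l x) m m'
      leibniz_lie := fun x y m => by
        change l x * (l y * m) = l ⁅x, y⁆ * m + l y * (l x * m)
        rw [hl]; ring }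
  letI i2 : LieModule K L (Fin n → K) :=
    { smul_lie := fun t x m => by
        change l (t • x) * m = t • (l x * m)
        rw [map_smul, smul_mul_assoc]
      lie_smul := fun t x m => mul_smul_comm t (l x) m }
  { carrier := Fin n → K }

theorem RedAux.traceForm_diagRep (n : ℕ) (l : L →ₗ[K] (Fin n → K))
    (hl : ∀ x y : L, l ⁅x, y⁆ = 0) (x y : L) :
    LieModule.traceForm K L (RedAux.diagRep n l hl).carrier x y = ∑ i, l x i * l y i := by
  have h1 : LieModule.traceForm K L (RedAux.diagRep n l hl).carrier x y =
      LinearMap.trace K (Fin n → K) (Matrix.toLin' (Matrix.diagonal (l x * l y))) := by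
    rw [LieModule.traceForm_apply_apply]
    congr 1
    refine LinearMap.ext fun (m : Fin n → K) => ?_
    change l x * (l y * m) = Matrix.toLin' (Matrix.diagonal (l x * l y)) m
    ext i
    simp [Matrix.mulVec_diagonal, mul_assoc]
  rw [h1, Matrix.trace_toLin'_eq, Matrix.trace_diagonal]
  rfl

/-- Semisimplification. -/
theorem RedAux.exists_semisimple (d : ℕ) : ∀ R : FinDimRep K L,
    Module.finrank K R.carrier ≤ d →
    ∃ S : FinDimRep K L, ComplementedLattice (LieSubmodule K L S.carrier) ∧
      ∀ x : L, LieModule.toEnd K L S.carrier x = 0 → ∀ y : L,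
        IsNilpotent (LieModule.toEnd K L R.carrier x * LieModule.toEnd K L R.carrier y) := by
  induction d with
  | zero =>
    intro R hR
    have : Subsingleton R.carrier := Module.finrank_zero_iff.1 (Nat.le_zero.1 hR)
    refine ⟨R, ⟨fun a => ⟨a, ?_⟩⟩, fun x hx y => ⟨1, ?_⟩⟩
    · have : ∀ b c : LieSubmodule K L R.carrier, b = c := fun b c => by
        ext m; rw [Subsingleton.elim m 0]; simp
      exact IsCompl.of_eq (this _ _) (this _ _)
    · exact LinearMap.ext fun m => Subsingleton.elim _ _
  | succ d ih =>
    intro R hR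
    by_cases hW : ∃ W : LieSubmodule K L R.carrier, W ≠ ⊥ ∧ W ≠ ⊤
    · obtain ⟨W, hb, ht⟩ := hW
      have ht' : W.toSubmodule ≠ ⊤ := fun h => ht (by
        rw [← LieSubmodule.toSubmodule_inj]; simpa using h)
      have hb' : W.toSubmodule ≠ ⊥ := fun h => hb (by
        rw [← LieSubmodule.toSubmodule_inj]; simpa using h)
      have hlt : Module.finrank K W < Module.finrank K R.carrier :=
        Submodule.finrank_lt ht'
      have hpos : 0 < Module.finrank K W := by
        have := Submodule.one_le_finrank_iff.2 hb'
        exact this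
      have hq : Module.finrank K (R.carrier ⧸ W.toSubmodule) + Module.finrank K W =
        Module.finrank K R.carrier := Submodule.finrank_quotient_add_finrank W.toSubmodule
      have : FiniteDimensional K W := inferInstanceAs (FiniteDimensional K W.toSubmodule)
      have : FiniteDimensional K (R.carrier ⧸ W) :=
        inferInstanceAs (FiniteDimensional K (R.carrier ⧸ W.toSubmodule))
      obtain ⟨S1, hS1, hn1⟩ := ih { carrier := W } (by change Module.finrank K W ≤ d; omega)
      obtain ⟨S2, hS2, hn2⟩ := ih { carrier := R.carrier ⧸ W } (by
        change Module.finrank K (R.carrier ⧸ W.toSubmodule) ≤ d; omega)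
      refine ⟨RedAux.prodRep S1 S2, RedAux.complemented_prodRep S1 S2 hS1 hS2, ?_⟩
      intro x hx y
      have hx1 : LieModule.toEnd K L S1.carrier x = 0 := LinearMap.ext fun m =>
        congrArg Prod.fst (LinearMap.congr_fun hx ((m, 0) : S1.carrier × S2.carrier))
      have hx2 : LieModule.toEnd K L S2.carrier x = 0 := LinearMap.ext fun m =>
        congrArg Prod.snd (LinearMap.congr_fun hx ((0, m) : S1.carrier × S2.carrier))
      obtain ⟨k1, hk1⟩ := hn1 x hx1 y
      obtain ⟨k2, hk2⟩ := hn2 x hx2 y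
      change (LieModule.toEnd K L W x * LieModule.toEnd K L W y) ^ k1 = 0 at hk1
      change (LieModule.toEnd K L (R.carrier ⧸ W) x *
        LieModule.toEnd K L (R.carrier ⧸ W) y) ^ k2 = 0 at hk2
      set f := LieModule.toEnd K L R.carrier x * LieModule.toEnd K L R.carrier y with hf
      have e1 : ∀ j : ℕ, ∀ m : W,
          (((LieModule.toEnd K L W x * LieModule.toEnd K L W y) ^ j) m : R.carrier) =
            (f ^ j) m := by
        intro j
        induction j with
        | zero => intro m; rfl
        | succ j ih => intro m; rw [pow_succ, pow_succ, Module.End.mul_apply, ih]; rfl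
      have e2 : ∀ j : ℕ, ∀ m : R.carrier,
          ((LieModule.toEnd K L (R.carrier ⧸ W) x *
            LieModule.toEnd K L (R.carrier ⧸ W) y) ^ j) (LieSubmodule.Quotient.mk m) =
            LieSubmodule.Quotient.mk ((f ^ j) m) := by
        intro j
        induction j with
        | zero => intro m; rfl
        | succ j ih =>
          intro m
          rw [pow_succ, pow_succ, Module.End.mul_apply, Module.End.mul_apply (f ^ j), ← ih]; rfl
      refine ⟨k1 + k2, LinearMap.ext fun m => ?_⟩
      have hm : (f ^ k2) m ∈ W := by
        have := e2 k2 m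
        rw [hk2, LinearMap.zero_apply] at this
        exact (LieSubmodule.Quotient.mk_eq_zero' (N := W)).1 this.symm
      rw [pow_add, Module.End.mul_apply]
      have := e1 k1 ⟨_, hm⟩
      rw [hk1] at this
      exact this.symm
    · push Not at hW
      refine ⟨R, ⟨fun a => ?_⟩, fun x hx y => ⟨1, by rw [hx]; simp⟩⟩
      by_cases h : a = ⊥
      · exact ⟨⊤, h ▸ isCompl_bot_top⟩
      · exact ⟨⊥, hW a h ▸ isCompl_top_bot⟩

end

/-- a finite-dimensional Lie algebra over a field of characteristic
zero is reductive iff it admits a nondegenerate trace form. -/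
theorem isReductive_iff_nondegenerate_traceForm
    (K L : Type) [Field K] [CharZero K] [LieRing L] [LieAlgebra K L]
    [FiniteDimensional K L] :
    IsReductive K L ↔
      ∃ R : FinDimRep K L, (LieModule.traceForm K L R.carrier).Nondegenerate := by
  constructor
  · rintro ⟨R, hinj, hc⟩
    have hrad := RedAux.radical_le hinj
    have hzero := RedAux.center_inf hinj
    let D : LieIdeal K L := ⁅(⊤ : LieIdeal K L), (⊤ : LieIdeal K L)⁆
    let e := (Module.finBasis K (L ⧸ D.toSubmodule)).equivFun
    let l := e.toLinearMap ∘ₗ D.toSubmodule.mkQ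
    have hker : ∀ x, l x = 0 ↔ x ∈ D := fun x => by simp [l]
    have hsurj : Function.Surjective l := e.surjective.comp (Submodule.mkQ_surjective _)
    have hl : ∀ x y : L, l ⁅x, y⁆ = 0 := fun x y =>
      (hker _).2 (LieSubmodule.lie_mem_lie (LieSubmodule.mem_top x) (LieSubmodule.mem_top y))
    let A : FinDimRep K L := { carrier := L }
    refine ⟨RedAux.prodRep A (RedAux.diagRep _ l hl), ?_⟩
    refine (LieModule.traceForm_isSymm K L _).isRefl.nondegenerate_iff_separatingLeft.mpr ?_
    intro x hx
    have hB : ∀ y, killingForm K L x y + ∑ i, l x i * l y i = 0 := fun y => by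
      rw [← hx y, RedAux.traceForm_prodRep, RedAux.traceForm_diagRep]
    have hxc : x ∈ LieAlgebra.center K L := by
      rw [LieModule.mem_maxTrivSubmodule]
      intro a
      rw [← lie_skew, neg_eq_zero]
      refine hzero _ (LieSubmodule.lie_mem_lie (LieSubmodule.mem_top x)
        (LieSubmodule.mem_top a)) (hrad (LieAlgebra.killingCompl_top_le_radical K L ?_))
      rw [LieIdeal.mem_killingCompl]
      intro b _
      rw [LieModule.traceForm_comm, LieModule.traceForm_apply_lie_apply]
      have := hB ⁅a, b⁆
      simpa [hl] using this
    have hk : ∀ y, killingForm K L x y = 0 := fun y => by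
      have h0 : LieAlgebra.ad K L x = 0 := by
        ext z
        have := (LieModule.mem_maxTrivSubmodule K L L x).1 hxc z
        rw [← lie_skew, neg_eq_zero] at this
        simpa using this
      rw [killingForm_apply_apply, h0]; simp
    refine hzero x ((hker x).1 ?_) hxc
    ext i
    obtain ⟨y, hy⟩ := hsurj (Pi.single i 1)
    have := hB y
    rw [hk, hy] at this
    simpa [Pi.single_apply] using this
  · rintro ⟨R, hR⟩
    obtain ⟨S, hS, hn⟩ := RedAux.exists_semisimple _ R le_rfl
    refine ⟨S, ?_, hS⟩
    refine (injective_iff_map_eq_zero _).2 fun x hx => ?_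
    refine hR.1 x fun y => ?_
    rw [LieModule.traceForm_apply_apply]
    exact (LinearMap.isNilpotent_trace_of_isNilpotent (hn x hx y)).eq_zero
end

section
/- Let g be a finite-dimensional reductive Lie algebra over a field of characteristic zero with a nondegenerate trace form, and let p, q ≤ g be parabolic subalgebras (self-normalizing subalgebras whose orthogonal complement equals their nilpotent radical). If p^⊥ ⊆ q (equivalently q^⊥ ⊆ p), then p ∩ q is a parabolic subalgebra of g. -/
/-- Orthogonal complement of a subspace with respect to a bilinear form. -/
def perp {K L : Type} [Field K] [LieRing L] [LieAlgebra K L]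
    (B : LinearMap.BilinForm K L) (p : Submodule K L) : Submodule K L where
  carrier := {x : L | ∀ y ∈ p, B x y = 0}
  zero_mem' := by intro y hy; simp
  add_mem' := by
    intro u v hu hv y hy
    simp [hu y hy, hv y hy]
  smul_mem' := by
    intro c u hu y hy
    simp [hu y hy]

/-- A subalgebra `p` of a reductive Lie algebra with admissible form `B` is
parabolic iff `p^⊥ ⊆ p` and `p` is self-normalizing (paper, Theorem 3.4 (4)). -/
def IsParabolic {K L : Type} [Field K] [LieRing L] [LieAlgebra K L]
    (B : LinearMap.BilinForm K L) (p : LieSubalgebra K L) : Prop :=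
  perp B p.toSubmodule ≤ p.toSubmodule ∧ p.normalizer = p

section helpers
open Polynomial Module
/-- commutator map in an associative algebra -/
def adm (K : Type*) {A : Type*} [Field K] [Ring A] [Algebra K A] (Y : A) : Module.End K A :=
  LinearMap.mulLeft K Y - LinearMap.mulRight K Y

lemma adm_apply (K : Type*) {A : Type*} [Field K] [Ring A] [Algebra K A] (Y f : A) :
    adm K Y f = Y * f - f * Y := by simp [adm]

lemma interp {F : Type*} [Field F] (s : Finset F) (n : ℕ) (c : F → F) :
    ∃ G : F[X], ∀ a ∈ s, (X - C a) ^ n ∣ G - C (c a) := by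
  classical
  have := Ideal.exists_forall_sub_mem_ideal (R := F[X]) (ι := s)
    (I := fun a => Ideal.span {(X - C (a : F)) ^ n}) (by
      intro a b hab
      change IsCoprime (Ideal.span _) (Ideal.span _)
      rw [Ideal.isCoprime_span_singleton_iff]
      exact (Polynomial.isCoprime_X_sub_C_of_isUnit_sub
        (IsUnit.mk0 _ (sub_ne_zero.2 fun h => hab (Subtype.ext h)))).pow)
    (fun a => C (c a))
  obtain ⟨G, hG⟩ := this
  exact ⟨G, fun a ha => Ideal.mem_span_singleton.1 (hG ⟨a, ha⟩)⟩

lemma interp_end {F W : Type*} [Field F] [AddCommGroup W] [Module F W] [FiniteDimensional F W]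
    (Y : End F W) (c : F → F) :
    ∃ G : F[X], ∀ a, ∀ v ∈ Y.maxGenEigenspace a, aeval Y G v = c a • v := by
  have hfin : {μ | Y.maxGenEigenspace μ ≠ ⊥}.Finite :=
      WellFoundedGT.finite_ne_bot_of_iSupIndep Y.independent_maxGenEigenspace
  obtain ⟨G, hG⟩ := interp hfin.toFinset (finrank F W) c
  refine ⟨G, fun a v hv => ?_⟩
  by_cases ha : Y.maxGenEigenspace a = ⊥
  · rw [ha, Submodule.mem_bot] at hv
    simp [hv]
  · obtain ⟨q, hq⟩ := hG a (by simpa using ha)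
    rw [Module.End.maxGenEigenspace_eq_genEigenspace_finrank, Module.End.mem_genEigenspace_nat,
      LinearMap.mem_ker] at hv
    have h1 : aeval Y (G - C (c a)) v = 0 := by
      rw [hq, mul_comm]
      simp only [map_mul, map_pow, map_sub, aeval_X, aeval_C, Module.End.mul_apply]
      rw [Algebra.algebraMap_eq_smul_one, hv, map_zero]
    simpa [sub_eq_zero] using h1

lemma shift {F W : Type*} [Field F] [AddCommGroup W] [Module F W]
    (Y f : End F W) (m a : F) (v : W) (hf : f ∈ (adm F Y).maxGenEigenspace m)
    (hv : v ∈ Y.maxGenEigenspace a) : f v ∈ Y.maxGenEigenspace (a + m) := by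
  rw [End.mem_maxGenEigenspace] at hf hv
  obtain ⟨k, hk⟩ := hf
  obtain ⟨l, hl⟩ := hv
  obtain ⟨n, hn⟩ : ∃ n, k + l = n := ⟨_, rfl⟩
  have key : ∀ (f : End F W) (v : W), (Y - (a + m) • (1 : End F W)) (f v) =
      ((adm F Y - m • (1 : End F (End F W))) f) v + f ((Y - a • (1 : End F W)) v) := by
    intro f v
    simp [adm_apply]
    module
  rw [End.mem_maxGenEigenspace]
  refine ⟨n, ?_⟩
  induction n generalizing k l f v with
  | zero =>
    obtain rfl : k = 0 := by omega
    simp at hk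
    simp [hk]
  | succ n ih =>
    rw [pow_succ, Module.End.mul_apply, key, map_add]
    rcases k with _ | k
    · simp at hk
      simp [hk]
    rcases l with _ | l
    · simp at hl
      simp [hl]
    rw [ih _ _ k ?_ (l + 1) hl (by omega), ih _ _ (k + 1) hk l ?_ (by omega), add_zero]
    · rwa [pow_succ, Module.End.mul_apply] at hl
    · rwa [pow_succ, Module.End.mul_apply] at hk

lemma trace_unip {F U : Type*} [Field F] [AddCommGroup U] [Module F U] [FiniteDimensional F U]
    (T : End F U) (μ : F) (hn : IsNilpotent (T - algebraMap F _ μ)) :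
    LinearMap.trace F U T = finrank F U * μ := by
  have := LinearMap.trace_comp_eq_mul_of_commute_of_isNilpotent μ (Commute.one_left T) hn
  rw [LinearMap.trace_one, mul_comm] at this
  rw [← this]; rfl

lemma lemA {F W : Type*} [Field F] [IsAlgClosed F] [CharZero F] [AddCommGroup W] [Module F W]
    [FiniteDimensional F W] (Y : End F W) (φ : F →ₗ[ℚ] ℚ) :
    ∃ (S : End F W) (P : F[X]), (∀ f, adm F S f = aeval (adm F Y) P f) ∧
     (LinearMap.trace F W (Y * S) = 0 → ∀ a, Y.maxGenEigenspace a ≠ ⊥ → φ a = 0) := by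
  classical
  obtain ⟨G, hG⟩ := interp_end Y (fun a => ((φ a : ℚ) : F))
  obtain ⟨P, hP⟩ := interp_end (adm F Y) (fun a => ((φ a : ℚ) : F))
  have htop := Module.End.iSup_maxGenEigenspace_eq_top Y
  refine ⟨aeval Y G, P, ?_, ?_⟩
  · intro f
    have hf : f ∈ ⨆ a, (adm F Y).maxGenEigenspace a := by
      rw [Module.End.iSup_maxGenEigenspace_eq_top]; trivial
    induction hf using Submodule.iSup_induction' with
    | zero => simp
    | add x y _ _ hx hy => rw [map_add, map_add, hx, hy]
    | mem m f hf =>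
      rw [hP m f hf, adm_apply]
      ext v
      have hv : v ∈ ⨆ a, Y.maxGenEigenspace a := by rw [htop]; trivial
      induction hv using Submodule.iSup_induction' with
      | zero => simp
      | add x y _ _ hx hy => rw [map_add, map_add, hx, hy]
      | mem a v hv =>
        have := hG _ _ (shift Y f m a v hf hv)
        simp only [LinearMap.sub_apply, Module.End.mul_apply, LinearMap.smul_apply, this, hG a v hv]
        simp
        module
  · intro htr a ha
    have hfin : {μ | Y.maxGenEigenspace μ ≠ ⊥}.Finite :=
      WellFoundedGT.finite_ne_bot_of_iSupIndep Y.independent_maxGenEigenspace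
    have hds := DirectSum.isInternal_submodule_of_iSupIndep_of_iSup_eq_top
      Y.independent_maxGenEigenspace htop
    have hcomm : Commute Y (Y * aeval Y G) := by
      have : Commute Y (aeval Y G) := by
        simpa using (Polynomial.commute_X G).map (aeval Y)
      exact (Commute.refl Y).mul_right this
    have hm := fun μ => Y.mapsTo_maxGenEigenspace_of_comm hcomm μ
    rw [LinearMap.trace_eq_sum_trace_restrict' hds hfin hm] at htr
    have hone : ∀ μ, LinearMap.trace F _ ((Y * aeval Y G).restrict (hm μ)) =
        (φ μ : F) * (finrank F (Y.maxGenEigenspace μ) * μ) := by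
      intro μ
      have hY := Y.mapsTo_maxGenEigenspace_of_comm (Commute.refl Y) μ
      have hn : IsNilpotent (Y.restrict hY - algebraMap F _ μ) :=
        Y.isNilpotent_restrict_maxGenEigenspace_sub_algebraMap μ
      have e : (Y * aeval Y G).restrict (hm μ) = (φ μ : F) • Y.restrict hY := by
        refine LinearMap.ext fun v => Subtype.ext ?_
        change Y (aeval Y G v) = (φ μ : F) • Y v
        rw [hG μ v v.2, map_smul]
      rw [e, map_smul, smul_eq_mul, trace_unip _ μ hn]
    simp_rw [hone] at htr
    have h2 := congrArg φ htr
    have h3 : ∀ μ, φ ((φ μ : F) * (finrank F (Y.maxGenEigenspace μ) * μ)) =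
        finrank F (Y.maxGenEigenspace μ) * (φ μ) ^ 2 := by
      intro μ
      have : (φ μ : F) * (finrank F (Y.maxGenEigenspace μ) * μ) =
        (φ μ * (finrank F (Y.maxGenEigenspace μ) : ℚ)) • μ := by
        rw [Algebra.smul_def]; simp [mul_assoc]
      rw [this, map_smul, smul_eq_mul]; ring
    rw [map_sum, map_zero] at h2
    simp_rw [h3] at h2
    rw [Finset.sum_eq_zero_iff_of_nonneg (fun _ _ => by positivity)] at h2
    have := h2 a (by simpa using ha)
    have hne : finrank F (Y.maxGenEigenspace a) ≠ 0 := by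
      simpa [Submodule.finrank_eq_zero] using ha
    simpa [hne] using this

lemma aeval_semiconj {K A A' : Type*} [Field K] [AddCommGroup A] [Module K A] [AddCommGroup A']
    [Module K A'] (g : A →ₗ[K] A') (f : End K A) (f' : End K A') (h : ∀ x, g (f x) = f' (g x))
    (Q : K[X]) (x : A) : g (aeval f Q x) = aeval f' Q (g x) := by
  have hpow : ∀ (i : ℕ) x, g ((f ^ i) x) = (f' ^ i) (g x) := by
    intro i
    induction i with
    | zero => simp
    | succ i ih => intro x; rw [pow_succ, pow_succ, End.mul_apply, End.mul_apply, ih, h]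
  induction Q using Polynomial.induction_on' with
  | add p q hp hq => simp [hp, hq]
  | monomial i c => simp [aeval_monomial, hpow, Module.algebraMap_end_apply]

lemma descend {K F n : Type*} [Field K] [Field F] [Algebra K F] [Fintype n] [DecidableEq n]
    (y : Matrix n n K) (ψ : F →ₗ[K] K) (P : F[X]) :
    ∃ Q : K[X], ∀ M : Matrix n n K,
      (aeval (adm F (y.map (algebraMap K F))) P (M.map (algebraMap K F))).map ψ =
        aeval (adm K y) Q M := by
  have hpow : ∀ (i : ℕ) (M : Matrix n n K),
      ((adm F (y.map (algebraMap K F))) ^ i) (M.map (algebraMap K F)) =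
        ((adm K y ^ i) M).map (algebraMap K F) := by
    intro i
    induction i with
    | zero => simp
    | succ i ih =>
      intro M
      rw [pow_succ, pow_succ, End.mul_apply, End.mul_apply, ← ih, adm_apply, adm_apply,
        Matrix.map_sub _ (by simp), Matrix.map_mul, Matrix.map_mul]
  induction P using Polynomial.induction_on' with
  | add p q hp hq =>
    obtain ⟨Q1, h1⟩ := hp
    obtain ⟨Q2, h2⟩ := hq
    refine ⟨Q1 + Q2, fun M => ?_⟩
    rw [map_add, map_add, LinearMap.add_apply, LinearMap.add_apply, ← h1, ← h2,
      Matrix.map_add _ (by simp)]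
  | monomial i c =>
    refine ⟨monomial i (ψ c), fun M => ?_⟩
    simp only [aeval_monomial, End.mul_apply, hpow, Module.algebraMap_end_apply]
    ext a b
    simp only [Matrix.map_apply, Matrix.smul_apply, smul_eq_mul]
    rw [mul_comm c, ← Algebra.smul_def, map_smul, smul_eq_mul, mul_comm]

lemma lemB {K n : Type*} [Field K] [CharZero K] [Fintype n] [DecidableEq n] (y : Matrix n n K)
    (h : ∀ (t : Matrix n n K) (Q : K[X]), (∀ f, adm K t f = aeval (adm K y) Q f) →
      (y * t).trace = 0) : IsNilpotent y := by
  let F := AlgebraicClosure K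
  have : CharZero F := charZero_of_injective_algebraMap (algebraMap K F).injective
  let ι := algebraMap K F
  let Y : Matrix n n F := y.map ι
  let Y' : End F (n → F) := Matrix.toLinAlgEquiv' Y
  have h0 : ∀ a, Y'.maxGenEigenspace a ≠ ⊥ → a = 0 := by
    intro a ha
    rw [← Module.forall_dual_apply_eq_zero_iff ℚ]
    intro φ
    obtain ⟨S', P, hS, htr⟩ := lemA Y' φ
    refine htr ?_ a ha
    obtain ⟨S, rfl⟩ := (Matrix.toLinAlgEquiv' (R := F) (n := n)).surjective S'
    have hS2 : ∀ f, adm F S f = aeval (adm F Y) P f := by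
      intro f
      apply (Matrix.toLinAlgEquiv' (R := F) (n := n)).injective
      have := aeval_semiconj (Matrix.toLinAlgEquiv' (R := F) (n := n)).toLinearMap (adm F Y)
        (adm F Y') (by intro x; simp [adm_apply, Y']) P f
      simp only [AlgEquiv.toLinearMap_apply] at this
      rw [this, ← hS, adm_apply, adm_apply, map_sub, map_mul, map_mul]
    rw [← map_mul]
    have : LinearMap.trace F (n → F) (Matrix.toLinAlgEquiv' (Y * S)) = (Y * S).trace :=
      Matrix.trace_toLin'_eq _
    rw [this, ← Module.forall_dual_apply_eq_zero_iff K]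
    intro ψ
    obtain ⟨Q, hQ⟩ := descend y ψ P
    have e1 : ∀ (A : Matrix n n K) (B : Matrix n n F), (A.map ι * B).map ψ = A * B.map ψ := by
      intro A B
      ext i j
      simp only [Matrix.map_apply, Matrix.mul_apply, map_sum]
      refine Finset.sum_congr rfl fun k _ => ?_
      rw [← Algebra.smul_def, map_smul, smul_eq_mul]
    have e2 : ∀ (A : Matrix n n K) (B : Matrix n n F), (B * A.map ι).map ψ = B.map ψ * A := by
      intro A B
      ext i j
      simp only [Matrix.map_apply, Matrix.mul_apply, map_sum]
      refine Finset.sum_congr rfl fun k _ => ?_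
      rw [mul_comm, ← Algebra.smul_def, map_smul, smul_eq_mul, mul_comm]
    have := h (S.map ψ) Q (by
      intro f
      rw [← hQ, ← hS2, adm_apply, adm_apply, Matrix.map_sub _ (by simp), e1, e2])
    rw [← this, ← e1]
    simp [Matrix.trace, Y]
  have htop : Y'.maxGenEigenspace 0 = ⊤ := by
    rw [← Module.End.iSup_maxGenEigenspace_eq_top Y']
    refine le_antisymm (le_iSup Y'.maxGenEigenspace 0) (iSup_le fun a => ?_)
    by_cases ha : Y'.maxGenEigenspace a = ⊥
    · simp [ha]
    · rw [h0 a ha]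
  have hN : IsNilpotent Y' := by
    rw [Module.End.maxGenEigenspace_eq_genEigenspace_finrank] at htop
    refine ⟨finrank F (n → F), ?_⟩
    refine LinearMap.ext fun v => ?_
    have hv : v ∈ Y'.genEigenspace 0 (finrank F (n → F)) := by rw [htop]; trivial
    rw [Module.End.mem_genEigenspace_nat, LinearMap.mem_ker] at hv
    simpa using hv
  have hY : IsNilpotent Y := by
    simpa [Y'] using hN.map (Matrix.toLinAlgEquiv' (R := F) (n := n)).symm
  have hinj : Function.Injective (RingHom.mapMatrix (m := n) ι) :=
    Matrix.map_injective ι.injective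
  exact (IsNilpotent.map_iff hinj).1 hY

lemma lemC {K V : Type*} [Field K] [CharZero K] [AddCommGroup V] [Module K V]
    [FiniteDimensional K V] (y : End K V)
    (h : ∀ (t : End K V) (Q : K[X]), (∀ f, adm K t f = aeval (adm K y) Q f) →
      LinearMap.trace K V (y * t) = 0) : IsNilpotent y := by
  let b := Module.finBasis K V
  let e := LinearMap.toMatrixAlgEquiv b
  have : IsNilpotent (e y) := by
    apply lemB
    intro t Q ht
    have h1 := h (e.symm t) Q (by
      intro f
      apply e.injective
      have := aeval_semiconj e.toLinearMap (adm K y)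
        (adm K (e y)) (by intro x; simp [adm_apply]) Q f
      simp only [AlgEquiv.toLinearMap_apply] at this
      rw [this, ← ht, adm_apply, adm_apply, map_sub, map_mul, map_mul, e.apply_symm_apply])
    rw [LinearMap.trace_eq_matrix_trace K b] at h1
    rw [← h1]
    congr 1
    change _ = e _
    simp
  simpa using this.map e.symm

section lie
variable {K L V : Type} [Field K] [LieRing L] [LieAlgebra K L] [AddCommGroup V] [Module K V]
  [LieRingModule L V] [LieModule K L V]

variable (K L V) in
/-- the action as a linear map -/
def act : L →ₗ[K] End K V where
  toFun x := LieModule.toEnd K L V x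
  map_add' x y := by simp
  map_smul' c x := by simp

lemma act_apply (x : L) (v : V) : act K L V x v = ⁅x, v⁆ := rfl

lemma act_lie (x y : L) : act K L V ⁅x, y⁆ = act K L V x * act K L V y -
    act K L V y * act K L V x := by
  ext v; simp [act_apply]

lemma tf (x y : L) : LieModule.traceForm K L V x y =
    LinearMap.trace K V (act K L V x * act K L V y) := rfl

variable [CharZero K] [FiniteDimensional K V] [FiniteDimensional K L]

lemma nilp_of_parab (hnd : (LieModule.traceForm K L V).Nondegenerate) (p : LieSubalgebra K L)
    (hp : p.normalizer = p) (y : L) (hy : y ∈ p)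
    (hy' : y ∈ perp (LieModule.traceForm K L V) p.toSubmodule) :
    IsNilpotent (act K L V y) := by
  apply lemC
  intro t Q ht
  let B := LieModule.traceForm K L V
  let fn : Module.Dual K L :=
    LinearMap.trace K V ∘ₗ LinearMap.mulLeft K t ∘ₗ act K L V
  let a := (LinearMap.BilinForm.toDual B hnd).symm fn
  have ha : ∀ x, B a x = LinearMap.trace K V (t * act K L V x) := fun x =>
    LinearMap.BilinForm.apply_toDual_symm_apply (hB := hnd) fn x
  let z : L → L := fun x => aeval (act K L L y) Q x
  have hz : ∀ x, act K L V (z x) = adm K t (act K L V x) := by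
    intro x
    rw [ht]
    exact aeval_semiconj (act K L V) (act K L L y) (adm K (act K L V y))
      (fun x => by rw [act_apply, act_lie, adm_apply]) Q x
  have haz : ∀ x, ⁅a, x⁆ = z x := by
    intro x
    rw [← sub_eq_zero]
    apply hnd.1
    intro w
    rw [map_sub, LinearMap.sub_apply, sub_eq_zero, LieModule.traceForm_apply_lie_apply]
    change B a _ = _
    rw [ha, tf, hz, act_lie, adm_apply, mul_sub, sub_mul, map_sub, map_sub]
    rw [mul_assoc, mul_assoc, LinearMap.trace_mul_comm K (act K L V x), mul_assoc]
  have hzp : ∀ x ∈ p, z x ∈ p := by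
    intro x hx
    have := aeval_semiconj p.toSubmodule.subtype
      ((act K L L y).restrict (p := p.toSubmodule) (q := p.toSubmodule)
        (fun w hw => p.lie_mem hy hw)) (act K L L y) (fun _ => rfl) Q ⟨x, hx⟩
    change aeval (act K L L y) Q x ∈ p.toSubmodule
    simp only [Submodule.subtype_apply] at this
    rw [← this]
    exact Submodule.coe_mem _
  have hap : a ∈ p := by
    rw [← hp, LieSubalgebra.mem_normalizer_iff]
    intro x hx
    rw [haz]
    exact hzp x hx
  rw [LinearMap.trace_mul_comm, ← ha]
  change LieModule.traceForm K L V a y = 0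
  rw [LieModule.traceForm_comm]
  exact hy' a hap

lemma engel (A : LieSubalgebra K L) (I : LieIdeal K A)
    (hI : ∀ y ∈ I, IsNilpotent (act K L V (y : L))) : ∃ k, I.lcs V k = ⊥ := by
  have : LieModule.IsNilpotent I V := by
    rw [LieModule.isNilpotent_iff_forall' (R := K)]
    intro x
    exact hI x.1 x.2
  obtain ⟨k, hk⟩ := (LieModule.isNilpotent_iff K I V).1 this
  refine ⟨k, ?_⟩
  rw [← LieSubmodule.toSubmodule_eq_bot, LieIdeal.coe_lcs_eq, hk]
  rfl

lemma trace_zero (A : LieSubalgebra K L) (I : LieIdeal K A)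
    (hI : ∀ y ∈ I, IsNilpotent (act K L V (y : L))) (x y : A) (hy : y ∈ I) :
    LieModule.traceForm K L V (x : L) (y : L) = 0 := by
  obtain ⟨k, hk⟩ := engel A I hI
  rw [tf]
  apply IsNilpotent.eq_zero
  apply LinearMap.isNilpotent_trace_of_isNilpotent
  refine ⟨k, ?_⟩
  ext v
  have : ∀ k, ((act K L V (x : L) * act K L V (y : L)) ^ k) v ∈ I.lcs V k := by
    intro k
    induction k with
    | zero => simp
    | succ k ih =>
      rw [pow_succ', End.mul_apply, LieIdeal.lcs_succ]
      exact LieSubmodule.lie_mem _ (x := x) (LieSubmodule.lie_mem_lie hy ih)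
  simpa [hk] using this k

lemma nilp_add (A : LieSubalgebra K L) (I : LieIdeal K A)
    (hI : ∀ y ∈ I, IsNilpotent (act K L V (y : L))) (x y : A) (hy : y ∈ I)
    (hx : IsNilpotent (act K L V (x : L))) : IsNilpotent (act K L V ((x + y : A) : L)) := by
  obtain ⟨k, hk⟩ := engel A I hI
  obtain ⟨m, hm⟩ := hx
  have h1 : ∀ k, ∀ v ∈ I.lcs V k, ∀ j, (act K L V ((x + y : A) : L) ^ j) v -
      (act K L V (x : L) ^ j) v ∈ I.lcs V (k + 1) ∧
      (act K L V (x : L) ^ j) v ∈ I.lcs V k := by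
    intro k v hv j
    induction j with
    | zero => simpa using hv
    | succ j ih =>
      obtain ⟨i1, i2⟩ := ih
      refine ⟨?_, ?_⟩
      · set w := (act K L V (x : L) ^ j) v
        set u := (act K L V ((x + y : A) : L) ^ j) v
        have e : (act K L V ((x + y : A) : L) ^ (j + 1)) v - (act K L V (x : L) ^ (j + 1)) v =
            ⁅x + y, u - w⁆ + ⁅y, w⁆ := by
          rw [pow_succ', pow_succ', End.mul_apply, End.mul_apply]
          change ⁅x + y, u⁆ - ⁅x, w⁆ = _
          rw [lie_sub, add_lie x y w]
          abel
        rw [e]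
        refine add_mem (LieSubmodule.lie_mem _ i1) ?_
        rw [LieIdeal.lcs_succ]
        exact LieSubmodule.lie_mem_lie hy i2
      · rw [pow_succ', End.mul_apply]
        exact LieSubmodule.lie_mem _ (x := x) i2
  refine ⟨m * k, ?_⟩
  ext v
  have : ∀ k, (act K L V ((x + y : A) : L) ^ (m * k)) v ∈ I.lcs V k := by
    intro k
    induction k with
    | zero => simp
    | succ k ih =>
      rw [mul_add, mul_one, add_comm (m * k) m, pow_add, End.mul_apply]
      have := (h1 k _ ih m).1
      simpa [hm] using this
  simpa [hk] using this k

end lie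
end helpers

/-- if `p, q` are parabolic subalgebras of a reductive Lie algebra with
admissible (nondegenerate) trace form `B` and `p^⊥ ⊆ q`, then `p ∩ q` is parabolic. -/
theorem costandard_inter_parabolic
    (K L : Type) [Field K] [CharZero K] [LieRing L] [LieAlgebra K L]
    [FiniteDimensional K L]
    (B : LinearMap.BilinForm K L)
    (htrace : ∃ R : FinDimRep K L, B = LieModule.traceForm K L R.carrier)
    (hnd : B.Nondegenerate)
    (p q : LieSubalgebra K L)
    (hp : IsParabolic B p) (hq : IsParabolic B q)
    (hpq : perp B p.toSubmodule ≤ q.toSubmodule) :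
    IsParabolic B (p ⊓ q) := by
  obtain ⟨R, rfl⟩ := htrace
  set B := LieModule.traceForm K L R.carrier with hB
  obtain ⟨hp1, hp2⟩ := hp
  obtain ⟨hq1, hq2⟩ := hq
  have hsymm : ∀ x y, B x y = B y x := LieModule.traceForm_comm K L R.carrier
  have hinv : ∀ x y z, B ⁅x, y⁆ z = - B y ⁅x, z⁆ :=
    LieModule.traceForm_apply_lie_apply' K L R.carrier
  have hperp : ∀ W : Submodule K L, perp B W = LinearMap.BilinForm.orthogonal B W := by
    intro W
    ext x
    rw [LinearMap.BilinForm.mem_orthogonal_iff]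
    exact forall₂_congr fun y _ => by rw [hsymm]
  have hrefl : LinearMap.BilinForm.IsRefl B := fun x y h => by rw [hsymm]; exact h
  have hpp : ∀ W : Submodule K L, perp B (perp B W) = W := by
    intro W
    rw [hperp, hperp]
    exact LinearMap.BilinForm.orthogonal_orthogonal hnd hrefl W
  have hanti : ∀ W W' : Submodule K L, W ≤ W' → perp B W' ≤ perp B W :=
    fun W W' h x hx y hy => hx y (h hy)
  have hqp : perp B q.toSubmodule ≤ p.toSubmodule := by
    have := hanti _ _ hpq
    rwa [hpp] at this
  -- normalizers act on orthogonal complements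
  have hstab : ∀ (c : LieSubalgebra K L) (x : L), x ∈ c.normalizer →
      ∀ y ∈ perp B c.toSubmodule, ⁅x, y⁆ ∈ perp B c.toSubmodule := by
    intro c x hx y hy w hw
    rw [hinv, hy _ ((LieSubalgebra.mem_normalizer_iff c x).1 hx w hw), neg_zero]
  have hsum : perp B (p ⊓ q).toSubmodule ≤ perp B p.toSubmodule ⊔ perp B q.toSubmodule := by
    rw [← hpp (perp B p.toSubmodule ⊔ perp B q.toSubmodule)]
    apply hanti
    have h1 := hanti _ _ (le_sup_left : perp B p.toSubmodule ≤ perp B p.toSubmodule ⊔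
      perp B q.toSubmodule)
    have h2 := hanti _ _ (le_sup_right : perp B q.toSubmodule ≤ perp B p.toSubmodule ⊔
      perp B q.toSubmodule)
    rw [hpp] at h1 h2
    exact fun x hx => ⟨h1 hx, h2 hx⟩
  have hco : perp B (p ⊓ q).toSubmodule ≤ (p ⊓ q).toSubmodule :=
    hsum.trans (sup_le (fun x hx => ⟨hp1 hx, hpq hx⟩) (fun x hx => ⟨hqp hx, hq1 hx⟩))
  -- the ideal of `A` given by `c^⊥`
  let idl : ∀ (A c : LieSubalgebra K L), A ≤ c.normalizer → LieIdeal K A := fun A c h =>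
    { (perp B c.toSubmodule).comap A.toSubmodule.subtype with
      lie_mem := by
        intro x m hm
        exact hstab c x (h x.2) m hm }
  have hnil : ∀ y ∈ perp B (p ⊓ q).toSubmodule, IsNilpotent (act K L R.carrier y) := by
    intro y hy
    obtain ⟨u, hu, v, hv, rfl⟩ := Submodule.mem_sup.1 (hsum hy)
    exact nilp_add (p ⊓ q) (idl (p ⊓ q) q (by rw [hq2]; exact inf_le_right))
      (fun w hw => nilp_of_parab hnd q hq2 w (hq1 hw) hw)
      ⟨u, hp1 hu, hpq hu⟩ ⟨v, hqp hv, hq1 hv⟩ hv (nilp_of_parab hnd p hp2 u (hp1 hu) hu)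
  refine ⟨hco, le_antisymm ?_ (LieSubalgebra.le_normalizer _)⟩
  intro x hx
  change x ∈ (p ⊓ q).toSubmodule
  rw [← hpp (p ⊓ q).toSubmodule]
  intro y hy
  exact trace_zero (p ⊓ q).normalizer (idl _ (p ⊓ q) le_rfl) (fun w hw => hnil w hw) ⟨x, hx⟩
    ⟨y, LieSubalgebra.le_normalizer _ (hco hy)⟩ hy
end

section
/- Let g be a finite-dimensional reductive Lie algebra over a field of characteristic zero and let p, q ≤ g be parabolic subalgebras. Then r := (p ∩ q) + nil(q) is a parabolic subalgebra of g, with nilpotent radical nil(r) = (nil(p) ∩ q) + nil(q). -/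
open Module Module.End in
lemma exists_scale {k V : Type*} [Field k] [IsAlgClosed k] [AddCommGroup V] [Module k V]
    [FiniteDimensional k V] (x : End k V) (f : k → k) :
    ∃ w : End k V, ∀ μ, ∀ v ∈ x.maxGenEigenspace μ, w v = f μ • v := by
  classical
  have hds := DirectSum.isInternal_submodule_of_iSupIndep_of_iSup_eq_top
    x.independent_maxGenEigenspace x.iSup_maxGenEigenspace_eq_top
  let b := hds.collectedBasis fun μ ↦ finBasis k (x.maxGenEigenspace μ)
  refine ⟨b.constr k fun i => f i.1 • b i, fun μ v hv => ?_⟩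
  have key : (b.constr k fun i => f i.1 • b i) ∘ₗ (x.maxGenEigenspace μ).subtype
      = f μ • (x.maxGenEigenspace μ).subtype := by
    refine (finBasis k (x.maxGenEigenspace μ)).ext fun i => ?_
    have : ((finBasis k (x.maxGenEigenspace μ) i : x.maxGenEigenspace μ) : V) = b ⟨μ, i⟩ := by
      simp [b, DirectSum.IsInternal.collectedBasis_coe]
    simp only [LinearMap.comp_apply, Submodule.subtype_apply, LinearMap.smul_apply, this,
      Basis.constr_basis]
  exact congrArg (fun g => g ⟨v, hv⟩) key

open Module Module.End in
lemma trace_scale {k V : Type*} [Field k] [IsAlgClosed k] [AddCommGroup V] [Module k V]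
    [FiniteDimensional k V] (x w : End k V) (f : k → k)
    (hw : ∀ μ, ∀ v ∈ x.maxGenEigenspace μ, w v = f μ • v)
    (hfin : {μ | x.maxGenEigenspace μ ≠ ⊥}.Finite) :
    LinearMap.trace k V (x * w) =
      ∑ μ ∈ hfin.toFinset, (finrank k (x.maxGenEigenspace μ) : k) * (f μ * μ) := by
  classical
  have hds := DirectSum.isInternal_submodule_of_iSupIndep_of_iSup_eq_top
    x.independent_maxGenEigenspace x.iSup_maxGenEigenspace_eq_top
  have hx := fun μ => x.mapsTo_maxGenEigenspace_of_comm (Commute.refl x) μ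
  have hxw : ∀ μ, Set.MapsTo (x * w) (x.maxGenEigenspace μ) (x.maxGenEigenspace μ) := by
    intro μ v hv
    rw [mul_apply, hw μ v hv]
    exact hx μ (Submodule.smul_mem _ _ hv)
  rw [LinearMap.trace_eq_sum_trace_restrict' hds hfin hxw]
  refine Finset.sum_congr rfl fun μ _ => ?_
  have e : (x * w).restrict (hxw μ) =
      (f μ • LinearMap.id) ∘ₗ (x.restrict (hx μ)) := by
    ext ⟨v, hv⟩
    change x (w v) = f μ • x v
    rw [hw μ v hv, map_smul]
  rw [e, LinearMap.trace_comp_eq_mul_of_commute_of_isNilpotent μ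
    (by ext; simp) (isNilpotent_restrict_maxGenEigenspace_sub_algebraMap x μ)]
  simp
  ring

attribute [local instance] LieRing.ofAssociativeRing in
open Module Module.End in
lemma lie_scale {k V : Type*} [Field k] [IsAlgClosed k] [CharZero k] [AddCommGroup V] [Module k V]
    [FiniteDimensional k V] (x w : End k V) (f : k →+ k)
    (hw : ∀ μ, ∀ v ∈ x.maxGenEigenspace μ, w v = f μ • v) (ν : k) (φ : End k V)
    (hφ : φ ∈ (LieAlgebra.ad k (End k V) x).maxGenEigenspace ν) :
    w * φ - φ * w = f ν • φ := by
  have h : ∀ v : V, v ∈ ⨆ μ, x.maxGenEigenspace μ → (w * φ - φ * w) v = (f ν • φ) v := by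
    intro v hv
    induction hv using Submodule.iSup_induction' with
    | mem μ v hv =>
      have h1 : φ v ∈ x.maxGenEigenspace (ν + μ) :=
        LieModule.lie_mem_maxGenEigenspace_toEnd (R := k) (L := End k V) (M := V) (x := x) (y := φ) hφ hv
      simp only [LinearMap.sub_apply, mul_apply, LinearMap.smul_apply]
      rw [hw _ _ h1, hw _ _ hv, map_smul, map_add, add_smul]
      abel
    | zero => simp
    | add u v _ _ hu hv => rw [map_add, map_add, hu, hv]
  ext v
  exact h v (by simp [x.iSup_maxGenEigenspace_eq_top])

attribute [local instance] LieRing.ofAssociativeRing in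
open Module Module.End in
lemma nilp_aux {k V : Type*} [Field k] [IsAlgClosed k] [CharZero k] [AddCommGroup V] [Module k V]
    [FiniteDimensional k V] (A B : Submodule k (End k V)) (hAB : A ≤ B) (x : End k V)
    (hx : ∀ b ∈ B, x * b - b * x ∈ A)
    (htr : ∀ w : End k V, (∀ b ∈ B, w * b - b * w ∈ A) → LinearMap.trace k V (x * w) = 0) :
    IsNilpotent x := by
  have hfin : {μ | x.maxGenEigenspace μ ≠ ⊥}.Finite :=
    WellFoundedGT.finite_ne_bot_of_iSupIndep x.independent_maxGenEigenspace
  set T := LieAlgebra.ad k (End k V) x with hT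
  have hTB : ∀ b ∈ B, T b ∈ A := hx
  -- stability
  have stab : ∀ f : k →+ k, ∀ w : End k V,
      (∀ μ, ∀ v ∈ x.maxGenEigenspace μ, w v = f μ • v) → ∀ b ∈ B, w * b - b * w ∈ A := by
    intro f w hw b hb
    have hB := Submodule.eq_iSup_inf_genEigenspace (p := B) (f := T) ⊤ (fun b hb => hAB (hTB b hb))
      T.iSup_maxGenEigenspace_eq_top
    rw [hB] at hb
    induction hb using Submodule.iSup_induction' with
    | mem ν b hb =>
      rw [lie_scale x w f hw ν b hb.2]
      by_cases hν : ν = 0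
      · simp [hν]
      apply A.smul_mem
      -- T is bijective on B ⊓ E_ν
      have hE : ∀ c ∈ B ⊓ T.maxGenEigenspace ν, T c ∈ B ⊓ T.maxGenEigenspace ν := fun c hc =>
        ⟨hAB (hTB c hc.1), T.mapsTo_maxGenEigenspace_of_comm (Commute.refl T) ν hc.2⟩
      have hinj : Function.Injective (T.restrict hE) := by
        rw [← LinearMap.ker_eq_bot, LinearMap.ker_eq_bot']
        rintro ⟨c, hc⟩ h0
        have h0' : T c = 0 := congrArg Subtype.val h0
        have hc0 : c ∈ T.maxGenEigenspace 0 :=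
          (mem_maxGenEigenspace _ _ _).2 ⟨1, by simpa using h0'⟩
        have := (T.disjoint_genEigenspace hν ⊤ ⊤).le_bot ⟨hc.2, hc0⟩
        simpa using this
      obtain ⟨⟨c, hc⟩, hcb⟩ := LinearMap.surjective_of_injective hinj ⟨b, hb⟩
      have : T c = b := congrArg Subtype.val hcb
      rw [← this]
      exact hTB c hc.1
    | zero => simp
    | add u v _ _ hu hv =>
      convert A.add_mem hu hv using 1
      noncomm_ring
  have hz : ∀ μ, x.maxGenEigenspace μ ≠ ⊥ → μ = 0 := by
    intro μ hμ
    rw [← Module.forall_dual_apply_eq_zero_iff ℚ]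
    intro f
    let F : k →+ k := (algebraMap ℚ k).toAddMonoidHom.comp f.toAddMonoidHom
    obtain ⟨w, hw⟩ := exists_scale x F
    have h0 := htr w (stab F w hw)
    rw [trace_scale x w F hw hfin] at h0
    have h1 := congrArg f h0
    have h2 : ∑ μ ∈ hfin.toFinset, (finrank k (x.maxGenEigenspace μ) : ℚ) * (f μ * f μ) = 0 := by
      rw [map_sum, map_zero] at h1
      rw [← h1]
      refine Finset.sum_congr rfl fun μ _ => ?_
      have : (finrank k (x.maxGenEigenspace μ) : k) * (F μ * μ) =
        ((finrank k (x.maxGenEigenspace μ) : ℚ) * f μ) • μ := by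
        simp [F, Algebra.smul_def, mul_assoc]
      rw [this, map_smul, smul_eq_mul, mul_assoc]
    have h3 := (Finset.sum_eq_zero_iff_of_nonneg
      (fun i _ => mul_nonneg (Nat.cast_nonneg _) (mul_self_nonneg _))).1 h2 μ (by simpa using hμ)
    have h4 : finrank k (x.maxGenEigenspace μ) ≠ 0 := by
      rwa [Ne, Submodule.finrank_eq_zero]
    simpa [h4, Submodule.finrank_eq_zero, hμ] using h3
  have htop : x.maxGenEigenspace 0 = ⊤ := by
    rw [eq_top_iff, ← x.iSup_maxGenEigenspace_eq_top]
    refine iSup_le fun μ => ?_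
    by_cases h : x.maxGenEigenspace μ = ⊥
    · simp [h]
    · rw [hz μ h]
  refine ⟨finrank k V, ?_⟩
  ext v
  have : v ∈ x.maxGenEigenspace 0 := by simp [htop]
  rw [maxGenEigenspace_eq_genEigenspace_finrank, mem_genEigenspace_nat] at this
  simpa using this

attribute [local instance] LieRing.ofAssociativeRing in
open Module TensorProduct in
/-- If `n` is an ideal of `p` that is trace-orthogonal to itself, `[p,n]` acts nilpotently. -/
lemma nilp_of_trace {K L V : Type*} [Field K] [CharZero K] [LieRing L] [LieAlgebra K L]
    [AddCommGroup V] [Module K V] [LieRingModule L V] [LieModule K L V] [FiniteDimensional K V]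
    (p n : Submodule K L) (hnp : n ≤ p) (hpn : ∀ y ∈ p, ∀ z ∈ n, ⁅y, z⁆ ∈ n)
    (htr : ∀ y ∈ n, ∀ z ∈ n, LieModule.traceForm K L V y z = 0)
    (x : L) (hx : x ∈ Submodule.span K {u : L | ∃ y ∈ p, ∃ z ∈ n, ⁅y, z⁆ = u}) :
    IsNilpotent (LieModule.toEnd K L V x) := by
  let k := AlgebraicClosure K
  have : CharZero k := charZero_of_injective_algebraMap (algebraMap K k).injective
  let ρ : L →ₗ[K] End k (k ⊗[K] V) :=
    (LinearMap.baseChangeHom K k V V) ∘ₗ (LieModule.toEnd K L V : L →ₗ[K] End K V)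
  have hρ : ∀ y, ρ y = (LieModule.toEnd K L V y).baseChange k := fun y => rfl
  have hρlie : ∀ y z, ρ ⁅y, z⁆ = ρ y * ρ z - ρ z * ρ y := by
    intro y z
    simp only [hρ, LieHom.map_lie, LieRing.of_associative_ring_bracket, LinearMap.baseChange_sub,
      LinearMap.baseChange_mul]
  have hxn : x ∈ n := by
    refine Submodule.span_le.2 ?_ hx
    rintro _ ⟨y, hy, z, hz, rfl⟩
    exact hpn y hy z hz
  let A : Submodule k (End k (k ⊗[K] V)) := Submodule.span k (Set.image ρ n)
  let B : Submodule k (End k (k ⊗[K] V)) := Submodule.span k (Set.image ρ p)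
  have hAB : A ≤ B := Submodule.span_mono (Set.image_mono hnp)
  have key : IsNilpotent (ρ x) := by
    refine nilp_aux A B hAB (ρ x) ?_ ?_
    · intro b hb
      induction hb using Submodule.span_induction with
      | mem b hb =>
        obtain ⟨y, hy, rfl⟩ := hb
        rw [← hρlie]
        refine Submodule.subset_span ⟨_, ?_, rfl⟩
        rw [← lie_skew]
        exact n.neg_mem (hpn y hy x hxn)
      | zero => simp
      | add u v _ _ hu hv =>
        convert A.add_mem hu hv using 1
        noncomm_ring
      | smul c u _ hu =>
        convert A.smul_mem c hu using 1
        simp [smul_sub]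
    · intro w hw
      have hA : ∀ z ∈ n, ∀ a ∈ A, LinearMap.trace k _ (ρ z * a) = 0 := by
        intro z hz a ha
        induction ha using Submodule.span_induction with
        | mem a ha =>
          obtain ⟨u, hu, rfl⟩ := ha
          have := htr z hz u hu
          rw [LieModule.traceForm_apply_apply] at this
          rw [hρ, hρ, ← LinearMap.baseChange_mul, LinearMap.trace_baseChange]
          rw [show LieModule.toEnd K L V z * LieModule.toEnd K L V u =
            LieModule.toEnd K L V z ∘ₗ LieModule.toEnd K L V u from rfl, this, map_zero]
        | zero => simp
        | add u v _ _ hu hv => rw [mul_add, map_add, hu, hv, add_zero]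
        | smul c u _ hu => rw [mul_smul_comm, map_smul, hu, smul_zero]
      clear hxn
      induction hx using Submodule.span_induction with
      | mem u hu =>
        obtain ⟨y, hy, z, hz, rfl⟩ := hu
        have h1 := hA z hz _ (hw (ρ y) (Submodule.subset_span ⟨y, hy, rfl⟩))
        rw [mul_sub, map_sub, ← mul_assoc, ← mul_assoc] at h1
        have e : LinearMap.trace k _ (ρ y * ρ z * w) = LinearMap.trace k _ (ρ z * w * ρ y) := by
          rw [mul_assoc, LinearMap.trace_mul_comm]
        rw [hρlie, sub_mul, map_sub, e, h1]
      | zero => simp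
      | add u v _ _ hu hv => rw [map_add, add_mul, map_add, hu, hv, add_zero]
      | smul c u _ hu => rw [map_smul, smul_mul_assoc, LinearMap.map_smul_of_tower, hu, smul_zero]
  have hbc_inj : Function.Injective (End.baseChangeHom K k V) :=
    LinearMap.baseChangeHom_injective K V k
  rw [← IsNilpotent.map_iff hbc_inj]
  exact key

/-- chain of stable subspaces for a nilpotently acting ideal -/
lemma exists_chain {K L V : Type*} [Field K] [LieRing L] [LieAlgebra K L]
    [AddCommGroup V] [Module K V] [LieRingModule L V] [LieModule K L V] [FiniteDimensional K V]
    (t : LieSubalgebra K L) (n : Submodule K L) (hnt : n ≤ t.toSubmodule)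
    (htn : ∀ y ∈ t, ∀ z ∈ n, ⁅y, z⁆ ∈ n)
    (hnil : ∀ z ∈ n, IsNilpotent (LieModule.toEnd K L V z)) :
    ∃ (F : ℕ → Submodule K V) (N : ℕ), F 0 = ⊤ ∧ F N = ⊥ ∧
      (∀ k, ∀ y ∈ t, ∀ v ∈ F k, ⁅y, v⁆ ∈ F k) ∧ (∀ k, ∀ z ∈ n, ∀ v ∈ F k, ⁅z, v⁆ ∈ F (k + 1)) := by
  let I : LieIdeal K t :=
    { n.comap t.toSubmodule.subtype with
      lie_mem := by
        intro y z hz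
        exact htn y y.2 z hz }
  have hI : LieModule.IsNilpotent I V := by
    rw [LieModule.isNilpotent_iff_forall' (R := K)]
    rintro ⟨⟨z, hzt⟩, hz⟩
    exact hnil z hz
  obtain ⟨N, hN⟩ := (LieModule.isNilpotent_iff K I V).1 hI
  refine ⟨fun k => (I.lcs V k).toSubmodule, N, by simp, ?_, ?_, ?_⟩
  · change (I.lcs V N).toSubmodule = ⊥
    rw [LieIdeal.coe_lcs_eq, hN]; rfl
  · intro k y hy v hv
    exact (I.lcs V k).lie_mem (x := ⟨y, hy⟩) hv
  · intro k z hz v hv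
    change _ ∈ I.lcs V (k + 1)
    rw [LieIdeal.lcs_succ]
    exact LieSubmodule.lie_mem_lie (I := I) (x := ⟨z, hnt hz⟩) hz hv

lemma trace_zero_of_ideal {K L V : Type*} [Field K] [LieRing L] [LieAlgebra K L]
    [AddCommGroup V] [Module K V] [LieRingModule L V] [LieModule K L V] [FiniteDimensional K V]
    (t : LieSubalgebra K L) (n : Submodule K L) (hnt : n ≤ t.toSubmodule)
    (htn : ∀ y ∈ t, ∀ z ∈ n, ⁅y, z⁆ ∈ n)
    (hnil : ∀ z ∈ n, IsNilpotent (LieModule.toEnd K L V z)) (y z : L) (hy : y ∈ t) (hz : z ∈ n) :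
    LieModule.traceForm K L V y z = 0 := by
  obtain ⟨F, N, h0, hN, hF1, hF2⟩ := exists_chain (V := V) t n hnt htn hnil
  rw [LieModule.traceForm_apply_apply]
  set g := LieModule.toEnd K L V y ∘ₗ LieModule.toEnd K L V z with hg
  refine (LinearMap.isNilpotent_trace_of_isNilpotent ⟨N, ?_⟩).eq_zero
  have : ∀ k v, (g ^ k) v ∈ F k := by
    intro k
    induction k with
    | zero => intro v; simp [h0]
    | succ k ih =>
      intro v
      rw [pow_succ', Module.End.mul_apply]
      exact hF1 _ y hy _ (hF2 _ z hz _ (ih v))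
  ext v
  simpa [hN] using this N v

lemma nilp_add_s14 {K L V : Type*} [Field K] [LieRing L] [LieAlgebra K L]
    [AddCommGroup V] [Module K V] [LieRingModule L V] [LieModule K L V] [FiniteDimensional K V]
    (t : LieSubalgebra K L) (n : Submodule K L) (hnt : n ≤ t.toSubmodule)
    (htn : ∀ y ∈ t, ∀ z ∈ n, ⁅y, z⁆ ∈ n)
    (hnil : ∀ z ∈ n, IsNilpotent (LieModule.toEnd K L V z)) (y z : L) (hy : y ∈ t) (hz : z ∈ n)
    (hyn : IsNilpotent (LieModule.toEnd K L V y)) :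
    IsNilpotent (LieModule.toEnd K L V (y + z)) := by
  obtain ⟨F, N, h0, hN, hF1, hF2⟩ := exists_chain (V := V) t n hnt htn hnil
  obtain ⟨m, hm⟩ := hyn
  set a := LieModule.toEnd K L V y with ha
  set g := LieModule.toEnd K L V (y + z) with hg
  have hgv : ∀ v, g v = ⁅y, v⁆ + ⁅z, v⁆ := fun v => add_lie y z v
  have hgF : ∀ k v, v ∈ F k → g v ∈ F k := by
    intro k v hv
    rw [hgv]
    exact (F k).add_mem (hF1 k y hy v hv) (hF1 k z (hnt hz) v hv)
  have hgF' : ∀ i k v, v ∈ F k → (g ^ i) v ∈ F k := by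
    intro i k v hv
    induction i with
    | zero => simpa
    | succ i ih => rw [pow_succ', Module.End.mul_apply]; exact hgF _ _ ih
  have h1 : ∀ i k v, v ∈ F k → (g ^ i) v - (a ^ i) v ∈ F (k + 1) := by
    intro i k v hv
    induction i with
    | zero => simp
    | succ i ih =>
      rw [pow_succ', Module.End.mul_apply, pow_succ', Module.End.mul_apply, hgv]
      have e : ⁅y, (g ^ i) v⁆ + ⁅z, (g ^ i) v⁆ - a ((a ^ i) v)
          = ⁅y, (g ^ i) v - (a ^ i) v⁆ + ⁅z, (g ^ i) v⁆ := by
        rw [lie_sub, ha, LieModule.toEnd_apply_apply]; abel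
      rw [e]
      exact (F (k + 1)).add_mem (hF1 _ y hy _ ih) (hF2 k z hz _ (hgF' i k v hv))
  have h2 : ∀ k v, ((g ^ m) ^ k) v ∈ F k := by
    intro k
    induction k with
    | zero => intro v; simp [h0]
    | succ k ih =>
      intro v
      rw [pow_succ', Module.End.mul_apply]
      simpa [hm] using h1 m k _ (ih v)
  refine ⟨m * N, ?_⟩
  rw [pow_mul]
  ext v
  simpa [hN] using h2 N v

lemma perp_eq_orth {K L : Type} [Field K] [LieRing L] [LieAlgebra K L]
    (B : LinearMap.BilinForm K L) (hs : ∀ x y, B x y = B y x) (p : Submodule K L) :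
    perp B p = B.orthogonal p := by
  ext x
  change (∀ y ∈ p, B x y = 0) ↔ (∀ y ∈ p, B y x = 0)
  simp only [hs x]

lemma perp_perp' {K L : Type} [Field K] [LieRing L] [LieAlgebra K L] [FiniteDimensional K L]
    (B : LinearMap.BilinForm K L) (hs : ∀ x y, B x y = B y x) (hnd : B.Nondegenerate)
    (p : Submodule K L) : perp B (perp B p) = p := by
  rw [perp_eq_orth B hs, perp_eq_orth B hs]
  exact LinearMap.BilinForm.orthogonal_orthogonal hnd
    (LinearMap.IsSymm.isRefl ⟨hs⟩) p

lemma perp_sup' {K L : Type} [Field K] [LieRing L] [LieAlgebra K L]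
    (B : LinearMap.BilinForm K L) (p q : Submodule K L) :
    perp B (p ⊔ q) = perp B p ⊓ perp B q := by
  ext x
  constructor
  · intro h
    exact ⟨fun y hy => h y (Submodule.mem_sup_left hy), fun y hy => h y (Submodule.mem_sup_right hy)⟩
  · rintro ⟨h1, h2⟩ y hy
    obtain ⟨u, hu, v, hv, rfl⟩ := Submodule.mem_sup.1 hy
    rw [map_add, h1 u hu, h2 v hv, add_zero]

/-- For a parabolic subalgebra, the orthogonal complement acts nilpotently. -/
lemma nil_of_parabolic {K L V : Type} [Field K] [CharZero K] [LieRing L] [LieAlgebra K L]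
    [FiniteDimensional K L]
    [AddCommGroup V] [Module K V] [LieRingModule L V] [LieModule K L V] [FiniteDimensional K V]
    (B : LinearMap.BilinForm K L) (hB : B = LieModule.traceForm K L V) (hnd : B.Nondegenerate)
    (p : LieSubalgebra K L) (hp : IsParabolic B p) :
    ∀ z ∈ perp B p.toSubmodule, IsNilpotent (LieModule.toEnd K L V z) := by
  have hs : ∀ x y, B x y = B y x := by
    intro x y; rw [hB]; exact LieModule.traceForm_comm K L V x y
  have hinv : ∀ x y z, B ⁅x, y⁆ z = B x ⁅y, z⁆ := by
    intro x y z; rw [hB]; exact LieModule.traceForm_apply_lie_apply K L V x y z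
  have hid : ∀ y ∈ p, ∀ z ∈ perp B p.toSubmodule, ⁅y, z⁆ ∈ perp B p.toSubmodule := by
    intro y hy z hz u hu
    rw [← lie_skew, map_neg, LinearMap.neg_apply, hinv, hz _ (p.lie_mem hy hu), neg_zero]
  intro z hz
  refine nilp_of_trace (V := V) p.toSubmodule (perp B p.toSubmodule) hp.1 hid ?_ z ?_
  · intro y hy z hz
    rw [← hB]
    exact hy z (hp.1 hz)
  · rw [← perp_perp' B hs hnd (Submodule.span K _)]
    intro u hu
    refine hz u ?_
    change u ∈ p
    rw [← hp.2, LieSubalgebra.mem_normalizer_iff]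
    intro y hy
    change ⁅u, y⁆ ∈ p.toSubmodule
    rw [← perp_perp' B hs hnd p.toSubmodule]
    intro v hv
    rw [hinv]
    exact hu _ (Submodule.subset_span ⟨y, hy, v, hv, rfl⟩)

/-- If the orthogonal complement is contained in `r` and acts nilpotently, `r` is parabolic. -/
lemma parabolic_of_nil {K L V : Type} [Field K] [CharZero K] [LieRing L] [LieAlgebra K L]
    [FiniteDimensional K L]
    [AddCommGroup V] [Module K V] [LieRingModule L V] [LieModule K L V] [FiniteDimensional K V]
    (B : LinearMap.BilinForm K L) (hB : B = LieModule.traceForm K L V) (hnd : B.Nondegenerate)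
    (r : LieSubalgebra K L) (hr : perp B r.toSubmodule ≤ r.toSubmodule)
    (hnil : ∀ z ∈ perp B r.toSubmodule, IsNilpotent (LieModule.toEnd K L V z)) :
    IsParabolic B r := by
  have hs : ∀ x y, B x y = B y x := by
    intro x y; rw [hB]; exact LieModule.traceForm_comm K L V x y
  have hinv : ∀ x y z, B ⁅x, y⁆ z = B x ⁅y, z⁆ := by
    intro x y z; rw [hB]; exact LieModule.traceForm_apply_lie_apply K L V x y z
  refine ⟨hr, le_antisymm ?_ r.le_normalizer⟩
  have hid : ∀ y ∈ r.normalizer, ∀ z ∈ perp B r.toSubmodule, ⁅y, z⁆ ∈ perp B r.toSubmodule := by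
    intro y hy z hz u hu
    rw [← lie_skew, map_neg, LinearMap.neg_apply, hinv,
      hz _ ((LieSubalgebra.mem_normalizer_iff r y).1 hy u hu), neg_zero]
  intro y hy
  change y ∈ r.toSubmodule
  rw [← perp_perp' B hs hnd r.toSubmodule]
  intro z hz
  rw [hB]
  exact trace_zero_of_ideal r.normalizer (perp B r.toSubmodule) (hr.trans r.le_normalizer) hid hnil
    y z hy hz

/-- for parabolic subalgebras `p, q` of a reductive Lie algebra with
admissible trace form `B` (so `nil(p) = p^⊥`, `nil(q) = q^⊥`), the subspace
`r = (p ∩ q) + nil(q)` is a parabolic subalgebra with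
`nil(r) = (nil(p) ∩ q) + nil(q)`. -/
theorem parabolic_pair_projection
    (K L : Type) [Field K] [CharZero K] [LieRing L] [LieAlgebra K L]
    [FiniteDimensional K L]
    (B : LinearMap.BilinForm K L)
    (htrace : ∃ R : FinDimRep K L, B = LieModule.traceForm K L R.carrier)
    (hnd : B.Nondegenerate)
    (p q : LieSubalgebra K L)
    (hp : IsParabolic B p) (hq : IsParabolic B q) :
    ∃ r : LieSubalgebra K L,
      r.toSubmodule = (p.toSubmodule ⊓ q.toSubmodule) ⊔ perp B q.toSubmodule ∧
      IsParabolic B r ∧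
      perp B r.toSubmodule =
        (perp B p.toSubmodule ⊓ q.toSubmodule) ⊔ perp B q.toSubmodule := by
  obtain ⟨R, hB⟩ := htrace
  have hs : ∀ x y, B x y = B y x := by
    intro x y; rw [hB]; exact LieModule.traceForm_comm K L R.carrier x y
  have hinv : ∀ x y z, B ⁅x, y⁆ z = B x ⁅y, z⁆ := by
    intro x y z; rw [hB]; exact LieModule.traceForm_apply_lie_apply K L R.carrier x y z
  have hid : ∀ y ∈ q, ∀ z ∈ perp B q.toSubmodule, ⁅y, z⁆ ∈ perp B q.toSubmodule := by
    intro y hy z hz u hu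
    rw [← lie_skew, map_neg, LinearMap.neg_apply, hinv, hz _ (q.lie_mem hy hu), neg_zero]
  let r : LieSubalgebra K L :=
    { (p.toSubmodule ⊓ q.toSubmodule) ⊔ perp B q.toSubmodule with
      lie_mem' := by
        intro a b ha hb
        obtain ⟨u, hu, v, hv, rfl⟩ := Submodule.mem_sup.1 ha
        obtain ⟨u', hu', v', hv', rfl⟩ := Submodule.mem_sup.1 hb
        refine Submodule.mem_sup.2 ⟨⁅u, u'⁆, ⟨p.lie_mem hu.1 hu'.1, q.lie_mem hu.2 hu'.2⟩,
          ⁅u, v'⁆ + ⁅v, u'⁆ + ⁅v, v'⁆, ?_, ?_⟩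
        · refine Submodule.add_mem _ (Submodule.add_mem _ (hid _ hu.2 _ hv') ?_)
            (hid _ (hq.1 hv) _ hv')
          rw [← lie_skew]
          exact Submodule.neg_mem _ (hid _ hu'.2 _ hv)
        · rw [add_lie, lie_add, lie_add]; abel }
  have hr : r.toSubmodule = (p.toSubmodule ⊓ q.toSubmodule) ⊔ perp B q.toSubmodule := rfl
  have hrp : perp B r.toSubmodule =
      (perp B p.toSubmodule ⊓ q.toSubmodule) ⊔ perp B q.toSubmodule := by
    have h1 : perp B (p.toSubmodule ⊓ q.toSubmodule)
        = perp B p.toSubmodule ⊔ perp B q.toSubmodule := by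
      rw [← perp_perp' B hs hnd (perp B p.toSubmodule ⊔ perp B q.toSubmodule), perp_sup',
        perp_perp' B hs hnd, perp_perp' B hs hnd]
    rw [hr, perp_sup', perp_perp' B hs hnd, h1, sup_comm, sup_inf_assoc_of_le _ hq.1, sup_comm]
  refine ⟨r, hr, ?_, hrp⟩
  refine parabolic_of_nil B hB hnd r ?_ ?_
  · rw [hrp, hr]
    exact sup_le_sup_right (inf_le_inf_right _ hp.1) _
  · rw [hrp]
    intro z hz
    obtain ⟨u, hu, v, hv, rfl⟩ := Submodule.mem_sup.1 hz
    exact nilp_add_s14 q (perp B q.toSubmodule) hq.1 hid (nil_of_parabolic B hB hnd q hq) u v hu.2 hv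
      (nil_of_parabolic B hB hnd p hp u hu.1)
end

section
/- Let x ∈ g be an element of a Lie algebra over a perfect field acting on a finite-dimensional semisimple g-module V via ρ, and suppose x = x_s + x_n where ad(x_s) is semisimple, ad(x_n) is nilpotent, x_n ∈ [g, g], [x_s, x_n] = 0, and the field has characteristic zero. Then ρ(x_s) is the semisimple part and ρ(x_n) the nilpotent part of the Jordan decomposition of ρ(x). -/
open Polynomial in
theorem aux_intertwine {K M E : Type*} [Field K] [AddCommGroup M] [Module K M] [AddCommGroup E]
    [Module K E] (f : M →ₗ[K] E) (T₁ : Module.End K M) (T₂ : Module.End K E)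
    (h : ∀ m, f (T₁ m) = T₂ (f m)) (q : K[X]) :
    ∀ m, f (aeval T₁ q m) = aeval T₂ q (f m) := by
  induction q using Polynomial.induction_on' with
  | add p q hp hq => intro m; simp [hp, hq]
  | monomial n a =>
    have h2 : ∀ m, f ((T₁ ^ n) m) = (T₂ ^ n) (f m) := by
      induction n with
      | zero => simp
      | succ n ih => intro m; rw [pow_succ, pow_succ, Module.End.mul_apply, Module.End.mul_apply,
          ih, h]
    intro m
    simp [aeval_monomial, h2]

open Polynomial in
theorem aux_commute {K A : Type*} [Field K] [Ring A] [Algebra K A] {T S a : A} (h : Commute T S)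
    (ha : a ∈ Algebra.adjoin K {S}) : Commute T a := by
  have : a ∈ Subalgebra.centralizer K {T} := by
    refine Algebra.adjoin_le (S := Subalgebra.centralizer K {T}) ?_ ha
    rintro _ rfl
    rw [SetLike.mem_coe, Subalgebra.mem_centralizer_iff]
    rintro _ rfl
    exact h.eq
  rw [Subalgebra.mem_centralizer_iff] at this
  exact this T rfl

open Polynomial in
/-- If a vector is killed by a squarefree polynomial in `n + s`, then `n` kills it. -/
theorem aux_nilp_kills {K E : Type*} [Field K] [PerfectField K] [AddCommGroup E] [Module K E]
    [FiniteDimensional K E] (n s : Module.End K E) (hn : IsNilpotent n) (hs : s.IsSemisimple)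
    (hc : Commute n s) (q : K[X]) (hq : Squarefree q) (v : E)
    (hv : aeval (n + s) q v = 0) : n v = 0 := by
  set W := LinearMap.ker (aeval (n + s) q) with hW
  have inv : ∀ T : Module.End K E, Commute T (n + s) → ∀ w ∈ W, T w ∈ W := by
    intro T hT w hw
    have h1 : Commute T (aeval (n + s) q) := aux_commute hT (aeval_mem_adjoin_singleton _ _)
    rw [hW, LinearMap.mem_ker, ← Module.End.mul_apply, ← h1.eq,
      Module.End.mul_apply, LinearMap.mem_ker.mp hw, map_zero]
  have in1 := inv n ((Commute.refl n).add_right hc)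
  have is1 := inv s (hc.symm.add_right (Commute.refl s))
  have it1 := inv (n + s) (Commute.refl _)
  have hT : Module.End.IsSemisimple (LinearMap.restrict (n + s) it1) := by
    refine Module.End.isSemisimple_of_squarefree_aeval_eq_zero hq ?_
    ext w
    have := aux_intertwine W.subtype (LinearMap.restrict (n + s) it1) (n + s) (fun _ => rfl) q w
    simp only [Submodule.subtype_apply] at this
    rw [this]
    exact w.2
  have hS := hs.restrict is1
  have hN := Module.End.isNilpotent.restrict in1 hn
  have hcomm : Commute (LinearMap.restrict (n + s) it1) (LinearMap.restrict s is1) := by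
    ext w
    exact LinearMap.congr_fun ((hc.add_left (Commute.refl s)).eq) w.1
  have hsub : LinearMap.restrict (n + s) it1 - LinearMap.restrict s is1
      = LinearMap.restrict n in1 := by
    ext w
    simp
  have h0 := Module.End.eq_zero_of_isNilpotent_isSemisimple hN
    (hsub ▸ hT.sub_of_commute hcomm hS)
  exact congrArg Subtype.val (LinearMap.congr_fun h0 ⟨v, hv⟩)

/-- If a vector is killed by a power of `n + s`, then `s` kills it. -/
theorem aux_ss_kills {K E : Type*} [Field K] [PerfectField K] [AddCommGroup E] [Module K E]
    [FiniteDimensional K E] (n s : Module.End K E) (hn : IsNilpotent n) (hs : s.IsSemisimple)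
    (hc : Commute n s) (k : ℕ) (v : E)
    (hv : ((n + s) ^ k) v = 0) : s v = 0 := by
  set W := LinearMap.ker ((n + s) ^ k) with hW
  have inv : ∀ T : Module.End K E, Commute T (n + s) → ∀ w ∈ W, T w ∈ W := by
    intro T hT w hw
    have h1 : Commute T ((n + s) ^ k) := hT.pow_right k
    rw [hW, LinearMap.mem_ker, ← Module.End.mul_apply, ← h1.eq,
      Module.End.mul_apply, LinearMap.mem_ker.mp hw, map_zero]
  have in1 := inv n ((Commute.refl n).add_right hc)
  have is1 := inv s (hc.symm.add_right (Commute.refl s))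
  have it1 := inv (n + s) (Commute.refl _)
  have hT : IsNilpotent (LinearMap.restrict (n + s) it1) := by
    refine ⟨k, ?_⟩
    ext w
    rw [Module.End.pow_restrict k]
    exact w.2
  have hS := hs.restrict is1
  have hN := Module.End.isNilpotent.restrict in1 hn
  have hcomm : Commute (LinearMap.restrict (n + s) it1) (LinearMap.restrict n in1) := by
    ext w
    exact LinearMap.congr_fun (((Commute.refl n).add_left hc.symm).eq) w.1
  have hsub : LinearMap.restrict (n + s) it1 - LinearMap.restrict n in1
      = LinearMap.restrict s is1 := by
    ext w
    simp
  have h0 := Module.End.eq_zero_of_isNilpotent_isSemisimple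
    (hsub ▸ hcomm.isNilpotent_sub hT hN) hS
  exact congrArg Subtype.val (LinearMap.congr_fun h0 ⟨v, hv⟩)

open Polynomial in
/-- A semisimple endomorphism `s` with `tr (s p(s)) = 0` for all `p` vanishes (char zero). -/
theorem aux_trace {K V : Type*} [Field K] [CharZero K] [AddCommGroup V] [Module K V]
    [FiniteDimensional K V] (s : Module.End K V) (hs : s.IsSemisimple)
    (h : ∀ a : K[X], LinearMap.trace K V (s * aeval s a) = 0) : s = 0 := by
  have hm : Squarefree (minpoly K s) := hs.minpoly_squarefree
  have key : ∃ a : K[X], minpoly K s ∣ X * (X * a - 1) := by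
    by_cases hX : (X : K[X]) ∣ minpoly K s
    · obtain ⟨q, hq⟩ := hX
      have hXq : ¬ (X : K[X]) ∣ q := by
        rintro ⟨r, rfl⟩
        exact not_isUnit_X (hm X ⟨r, by rw [hq]; ring⟩)
      obtain ⟨a, b, hab⟩ := (irreducible_X.coprime_iff_not_dvd (n := q)).mpr hXq
      exact ⟨a, -b, by rw [hq]; linear_combination (X : K[X]) * hab⟩
    · obtain ⟨a, b, hab⟩ := (irreducible_X.coprime_iff_not_dvd (n := minpoly K s)).mpr hX
      exact ⟨a, -b * X, by linear_combination (X : K[X]) * hab⟩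
  obtain ⟨a, r, hr⟩ := key
  have h1 : s * (s * aeval s a - 1) = 0 := by
    have := congrArg (aeval s) hr
    simpa using this
  have hcs : Commute s (aeval s a) := aux_commute (Commute.refl s) (aeval_mem_adjoin_singleton _ _)
  have hid : IsIdempotentElem (s * aeval s a) := by
    have h2 : (s * aeval s a) * (s * aeval s a) - s * aeval s a
        = aeval s a * (s * (s * aeval s a - 1)) := by
      rw [← mul_assoc (aeval s a), ← hcs.eq]; noncomm_ring
    rw [h1, mul_zero] at h2
    exact sub_eq_zero.mp h2
  have h3 := LinearMap.IsIdempotentElem.eq_zero_of_trace_eq_zero hid (h a)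
  rw [h3] at h1
  simpa using h1

section

attribute [local instance] LieRing.ofAssociativeRing

theorem aux_main
    (K L V : Type*) [Field K] [CharZero K] [LieRing L] [LieAlgebra K L]
    [FiniteDimensional K L]
    [AddCommGroup V] [Module K V] [LieRingModule L V] [LieModule K L V]
    [FiniteDimensional K V]
    (hss : ComplementedLattice (LieSubmodule K L V))
    (xs : L)
    (hads : (LieAlgebra.ad K L xs).IsSemisimple) :
    (LieModule.toEnd K L V xs).IsSemisimple := by
  obtain ⟨n, hnm, s, hsm, hn, hs, hsum⟩ :=
    (LieModule.toEnd K L V xs).exists_isNilpotent_isSemisimple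
  have hc : Commute n s :=
    (aux_commute (aux_commute (Commute.refl _) hnm).symm hsm)
  have hcen : ∀ y : L, ⁅n, LieModule.toEnd K L V y⁆ = 0 := by
    intro y
    refine aux_nilp_kills (LieAlgebra.ad K (Module.End K V) n) (LieAlgebra.ad K (Module.End K V) s)
      (LieAlgebra.ad_nilpotent_of_nilpotent hn) (LieAlgebra.ad_isSemisimple_of_isSemisimple hs)
      (LieAlgebra.commute_ad_of_commute hc) (minpoly K (LieAlgebra.ad K L xs))
      hads.minpoly_squarefree _ ?_
    rw [← map_add, ← hsum]
    have := aux_intertwine (LieModule.toEnd K L V : L →ₗ[K] Module.End K V)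
      (LieAlgebra.ad K L xs) (LieAlgebra.ad K (Module.End K V) (LieModule.toEnd K L V xs))
      (fun m => by simp) (minpoly K (LieAlgebra.ad K L xs)) y
    rw [minpoly.aeval] at this
    simpa using this.symm
  have hcen' : ∀ (y : L) (v : V), n ⁅y, v⁆ = ⁅y, n v⁆ := by
    intro y v
    have := LinearMap.congr_fun (hcen y) v
    simpa [Ring.lie_def, sub_eq_zero] using this
  let Z : LieSubmodule K L V := { LinearMap.ker n with
    lie_mem := by
      intro y v hv
      have hv' : n v = 0 := hv
      change n ⁅y, v⁆ = 0
      rw [hcen', hv', lie_zero] }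
  obtain ⟨W, hW⟩ := hss.exists_isCompl Z
  have hWn : ∀ w ∈ W, n w ∈ W := by
    have : ∀ T ∈ Algebra.adjoin K {LieModule.toEnd K L V xs}, ∀ w ∈ W, T w ∈ W := by
      intro T hT
      induction hT using Algebra.adjoin_induction with
      | mem T h => rw [Set.mem_singleton_iff.mp h]; intro w hw; exact W.lie_mem hw
      | algebraMap r => intro w hw; exact W.smul_mem r hw
      | add a b _ _ ha hb => intro w hw; exact W.add_mem (ha w hw) (hb w hw)
      | mul a b _ _ ha hb => intro w hw; exact ha _ (hb w hw)
    exact this n hnm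
  have hdisj : ∀ w ∈ W, n w = 0 → w = 0 := by
    intro w hw hnw
    have : w ∈ Z ⊓ W := ⟨hnw, hw⟩
    rw [hW.inf_eq_bot] at this
    simpa using this
  obtain ⟨k, hk⟩ := hn
  have hW0 : ∀ j : ℕ, ∀ w ∈ W, (n ^ j) w = 0 → w = 0 := by
    intro j
    induction j with
    | zero => intro w _ h; simpa using h
    | succ j ih =>
      intro w hw h
      rw [pow_succ, Module.End.mul_apply] at h
      exact hdisj w hw (ih _ (hWn w hw) h)
  have hWbot : W = ⊥ := by
    rw [eq_bot_iff]
    intro w hw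
    simpa using hW0 k w hw (by rw [hk]; rfl)
  have hZ : Z = ⊤ := by
    have := hW.sup_eq_top
    rwa [hWbot, sup_bot_eq] at this
  have hn0 : n = 0 := by
    ext v
    have : v ∈ Z := by rw [hZ]; trivial
    exact this
  rw [hsum, hn0, zero_add]
  exact hs

theorem aux_main2
    (K L V : Type*) [Field K] [CharZero K] [LieRing L] [LieAlgebra K L]
    [FiniteDimensional K L]
    [AddCommGroup V] [Module K V] [LieRingModule L V] [LieModule K L V]
    [FiniteDimensional K V]
    (xn : L)
    (hadn : IsNilpotent (LieAlgebra.ad K L xn))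
    (hxn : xn ∈ ⁅(⊤ : LieIdeal K L), (⊤ : LieIdeal K L)⁆) :
    IsNilpotent (LieModule.toEnd K L V xn) := by
  obtain ⟨n, hnm, s, hsm, hn, hs, hsum⟩ :=
    (LieModule.toEnd K L V xn).exists_isNilpotent_isSemisimple
  have hc : Commute n s :=
    (aux_commute (aux_commute (Commute.refl _) hnm).symm hsm)
  obtain ⟨k, hk⟩ := hadn
  have hcen : ∀ y : L, ⁅s, LieModule.toEnd K L V y⁆ = 0 := by
    intro y
    refine aux_ss_kills (LieAlgebra.ad K (Module.End K V) n) (LieAlgebra.ad K (Module.End K V) s)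
      (LieAlgebra.ad_nilpotent_of_nilpotent hn) (LieAlgebra.ad_isSemisimple_of_isSemisimple hs)
      (LieAlgebra.commute_ad_of_commute hc) k _ ?_
    rw [← map_add, ← hsum]
    have := aux_intertwine (LieModule.toEnd K L V : L →ₗ[K] Module.End K V)
      (LieAlgebra.ad K L xn) (LieAlgebra.ad K (Module.End K V) (LieModule.toEnd K L V xn))
      (fun m => by simp) (Polynomial.X ^ k) y
    rw [map_pow, Polynomial.aeval_X, hk, map_pow, Polynomial.aeval_X] at this
    simpa using this.symm
  have hcen' : ∀ y : L, Commute (LieModule.toEnd K L V y) s := by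
    intro y
    have := hcen y
    rw [Ring.lie_def, sub_eq_zero] at this
    exact this.symm
  have htr : ∀ c : Module.End K V, (∀ y : L, Commute (LieModule.toEnd K L V y) c) →
      LinearMap.trace K V (LieModule.toEnd K L V xn * c) = 0 := by
    intro c hcc
    have hx' : xn ∈ (⁅(⊤ : LieIdeal K L), (⊤ : LieIdeal K L)⁆ : LieIdeal K L).toSubmodule := hxn
    rw [LieSubmodule.lieIdeal_oper_eq_linear_span'] at hx'
    clear hcen hsum hsm hnm hk hxn
    induction hx' using Submodule.span_induction with
    | mem x h =>
      obtain ⟨a, -, b, -, rfl⟩ := h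
      rw [LieHom.map_lie, Ring.lie_def, sub_mul, map_sub, sub_eq_zero,
        mul_assoc (LieModule.toEnd K L V b), (hcc a).eq, mul_assoc,
        LinearMap.trace_mul_comm, mul_assoc]
    | zero => simp
    | add x y _ _ hx hy => rw [map_add, add_mul, map_add, hx, hy, add_zero]
    | smul r x _ hx => rw [map_smul, smul_mul_assoc, map_smul, hx, smul_zero]
  have hs0 : s = 0 := by
    refine aux_trace s hs fun a => ?_
    have h1 := htr (Polynomial.aeval s a)
      (fun y => aux_commute (hcen' y) (Polynomial.aeval_mem_adjoin_singleton _ _))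
    have hca : Commute n (Polynomial.aeval s a) :=
      aux_commute hc (Polynomial.aeval_mem_adjoin_singleton _ _)
    have h2 : LinearMap.trace K V (n * Polynomial.aeval s a) = 0 :=
      (LinearMap.isNilpotent_trace_of_isNilpotent (hca.isNilpotent_mul_right hn)).eq_zero
    rw [hsum, add_mul, map_add, h2, zero_add] at h1
    exact h1
  rw [hsum, hs0, add_zero]
  exact hn



theorem aux_comm
    (K L V : Type*) [Field K] [LieRing L] [LieAlgebra K L]
    [AddCommGroup V] [Module K V] [LieRingModule L V] [LieModule K L V]
    (xs xn : L) (hcomm : ⁅xs, xn⁆ = 0) :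
    Commute (LieModule.toEnd K L V xs) (LieModule.toEnd K L V xn) := by
  have h := (LieModule.toEnd K L V).map_lie xs xn
  rw [hcomm, map_zero, Ring.lie_def] at h
  exact sub_eq_zero.mp h.symm

end

/-- if `V` is a semisimple (completely reducible) finite-dimensional
representation of `g` over a field of characteristic zero, and `x = x_s + x_n` with
`ad(x_s)` semisimple, `ad(x_n)` nilpotent, `x_n ∈ [g,g]` and `[x_s, x_n] = 0`, then
`ρ(x_s)` and `ρ(x_n)` are the semisimple and nilpotent parts of the Jordan
decomposition of `ρ(x)` (they are commuting semisimple/nilpotent endomorphisms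
summing to `ρ(x)`). -/
theorem jordan_parts_of_semisimple_rep
    (K L V : Type*) [Field K] [CharZero K] [LieRing L] [LieAlgebra K L]
    [FiniteDimensional K L]
    [AddCommGroup V] [Module K V] [LieRingModule L V] [LieModule K L V]
    [FiniteDimensional K V]
    (hss : ComplementedLattice (LieSubmodule K L V))
    (x xs xn : L) (hx : x = xs + xn)
    (hads : (LieAlgebra.ad K L xs).IsSemisimple)
    (hadn : IsNilpotent (LieAlgebra.ad K L xn))
    (hxn : xn ∈ ⁅(⊤ : LieIdeal K L), (⊤ : LieIdeal K L)⁆)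
    (hcomm : ⁅xs, xn⁆ = 0) :
    (LieModule.toEnd K L V xs).IsSemisimple ∧
      IsNilpotent (LieModule.toEnd K L V xn) ∧
      Commute (LieModule.toEnd K L V xs) (LieModule.toEnd K L V xn) ∧
      LieModule.toEnd K L V x =
        LieModule.toEnd K L V xs + LieModule.toEnd K L V xn := by
  exact ⟨aux_main K L V hss xs hads, aux_main2 K L V xn hadn hxn,
    aux_comm K L V xs xn hcomm, by rw [hx, map_add]⟩
end
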